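/- arXiv:2210.09908 — 3 statements merged into one kernel-verified Lean document; each statement's English description precedes it below -/
import Mathlib

section
/- Let 0 < r < R and λ ∈ ℝ. Suppose u, v : ℝ² → ℂ are twice continuously differentiable on an open neighbourhood of the closed annulus {x ∈ ℝ² : r ≤ |x| ≤ R} and satisfy (−Δ − λ²)u = 0 and (−Δ − λ²)v = 0 there. Then the flux pairing is independent of the radius: ∫_{∂B(0,R)} ( v(x) ∂_ρ u(x) − u(x) ∂_ρ v(x) ) ds(x) = ∫_{∂B(0,r)} ( v(x) ∂_ρ u(x) − u(x) ∂_ρ v(x) ) ds(x). -/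
open MeasureTheory

noncomputable section

/-- The plane `ℝ²` with its Euclidean structure. -/
abbrev E2 := EuclideanSpace ℝ (Fin 2)

/-- The Euclidean Laplacian of a complex-valued function on `ℝ²`:
`Δu(x) = ∑ᵢ ∂²u/∂xᵢ²(x)`. -/
noncomputable def lap (u : E2 → ℂ) (x : E2) : ℂ :=
  ∑ i : Fin 2,
    fderiv ℝ (fun y => fderiv ℝ u y (EuclideanSpace.single i (1 : ℝ))) x
      (EuclideanSpace.single i (1 : ℝ))

/-- The radial derivative `∂_ρ u(x) = ⟨∇u(x), x/|x|⟩`. -/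
noncomputable def rderiv (u : E2 → ℂ) (x : E2) : ℂ :=
  fderiv ℝ u x (‖x‖⁻¹ • x)


lemma circle_finite (ρ : ℝ) (hρ : 0 < ρ) :
    (μH[1] : Measure ℂ) (Metric.sphere 0 ρ) < ⊤ := by
  have h := image_circleMap_Ioc 0 ρ
  rw [abs_of_pos hρ] at h
  rw [← h]
  refine lt_of_le_of_lt
    ((lipschitzWith_circleMap 0 ρ).hausdorffMeasure_image_le zero_le_one _) ?_
  rw [hausdorffMeasure_real]
  refine ENNReal.mul_lt_top ?_ ?_
  · simp
  · simp [ENNReal.mul_lt_top_iff]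

lemma circle_avg (ρ : ℝ) (hρ : 0 < ρ) (h : ℂ → ℂ) (hc : Continuous h) :
    ((2 * Real.pi : ℝ) : ℂ) * ∫ z in Metric.sphere (0 : ℂ) ρ, h z ∂μH[1]
      = (((μH[1] : Measure ℂ) (Metric.sphere 0 ρ)).toReal : ℂ) *
        ∫ t in (0 : ℝ)..(2 * Real.pi), h (circleMap 0 ρ t) := by
  set μ : Measure ℂ := (μH[1] : Measure ℂ).restrict (Metric.sphere 0 ρ) with hμ
  have : IsFiniteMeasure μ := ⟨by simpa [hμ] using circle_finite ρ hρ⟩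
  have hpi : (0 : ℝ) ≤ 2 * Real.pi := by positivity
  -- rotation invariance
  have hrot : ∀ t : ℝ, ∫ z, h (circleMap 0 1 t * z) ∂μ = ∫ z, h z ∂μ := by
    intro t
    let e := (rotation (Circle.exp t)).toIsometryEquiv
    have he : ∀ z, e z = circleMap 0 1 t * z := by
      intro z
      simp [e, rotation_apply, circleMap]
    have hmp := e.measurePreserving_hausdorffMeasure 1
    have h1 := hmp.setIntegral_preimage_emb e.toHomeomorph.measurableEmbedding h
      (Metric.sphere 0 ρ)
    have h2 : e ⁻¹' (Metric.sphere 0 ρ) = Metric.sphere 0 ρ := by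
      ext z
      simp only [Set.mem_preimage, mem_sphere_zero_iff_norm, he]
      simp
    rw [h2] at h1
    simp only [he] at h1
    exact h1
  have hae : ∀ᵐ z ∂μ, z ∈ Metric.sphere (0 : ℂ) ρ :=
    ae_restrict_mem Metric.isClosed_sphere.measurableSet
  have hin : ∀ z ∈ Metric.sphere (0 : ℂ) ρ,
      ∫ t in (0 : ℝ)..(2 * Real.pi), h (circleMap 0 1 t * z)
        = ∫ t in (0 : ℝ)..(2 * Real.pi), h (circleMap 0 ρ t) := by
    intro z hz
    have hz' := hz
    have h0 := image_circleMap_Ioc 0 ρ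
    rw [abs_of_pos hρ] at h0
    rw [← h0] at hz'
    obtain ⟨s, -, rfl⟩ := hz'
    have : ∀ t, h (circleMap 0 1 t * circleMap 0 ρ s) = h (circleMap 0 ρ (t + s)) := by
      intro t
      congr 1
      simp [circleMap, add_mul, Complex.exp_add]
      ring
    simp only [this]
    rw [intervalIntegral.integral_comp_add_right (fun t => h (circleMap 0 ρ t))]
    have hp : Function.Periodic (fun t => h (circleMap 0 ρ t)) (2 * Real.pi) := by
      intro t
      simp only [periodic_circleMap 0 ρ t]
    have := hp.intervalIntegral_add_eq s 0
    simpa [add_comm] using this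
  obtain ⟨C, hC⟩ := (isCompact_sphere (0 : ℂ) ρ).exists_bound_of_continuousOn hc.continuousOn
  have hint : Integrable (Function.uncurry fun (z : ℂ) (t : ℝ) => h (circleMap 0 1 t * z))
      (μ.prod (volume.restrict (Set.Ioc 0 (2 * Real.pi)))) := by
    refine Integrable.of_bound (C := C) ?_ ?_
    · apply Continuous.aestronglyMeasurable
      have := continuous_circleMap 0 1
      simp only [Function.uncurry_def]
      fun_prop
    · have := Measure.quasiMeasurePreserving_fst (μ := μ)
        (ν := volume.restrict (Set.Ioc 0 (2 * Real.pi)))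
      filter_upwards [this.ae hae] with p hp
      apply hC
      simpa using hp
  have hsw := integral_integral_swap hint
  have hL : ∫ z, (∫ t in Set.Ioc (0 : ℝ) (2 * Real.pi), h (circleMap 0 1 t * z)) ∂μ
      = (μ.real Set.univ : ℂ) * ∫ t in (0 : ℝ)..(2 * Real.pi), h (circleMap 0 ρ t) := by
    rw [integral_congr_ae (g := fun _ => ∫ t in (0 : ℝ)..(2 * Real.pi), h (circleMap 0 ρ t))]
    · rw [integral_const]; simp
    · filter_upwards [hae] with z hz
      rw [← intervalIntegral.integral_of_le hpi]
      exact hin z hz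
  rw [hL] at hsw
  simp only [hrot] at hsw
  rw [integral_const] at hsw
  simp [Measure.real, hμ] at hsw ⊢
  rw [hsw, ENNReal.toReal_ofReal Real.pi_pos.le]

open scoped Pointwise in
lemma circle_scale (r R : ℝ) (hr : 0 < r) (hR : 0 < R) :
    ((μH[1] : Measure ℂ) (Metric.sphere 0 R)).toReal
      = R / r * ((μH[1] : Measure ℂ) (Metric.sphere 0 r)).toReal := by
  have hq : R / r ≠ 0 := by positivity
  have h : Metric.sphere (0 : ℂ) R = (R / r) • Metric.sphere (0 : ℂ) r := by
    rw [smul_sphere' hq, smul_zero, Real.norm_of_nonneg (by positivity), div_mul_cancel₀ _ hr.ne']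
  rw [h, Measure.hausdorffMeasure_smul₀ zero_le_one hq]
  simp [ENNReal.smul_def, ENNReal.toReal_mul, abs_of_pos hr, abs_of_pos hR]

/-- The unit radial vector at angle `t`. -/
def ee (t : ℝ) : E2 :=
  Real.cos t • EuclideanSpace.single 0 (1 : ℝ) + Real.sin t • EuclideanSpace.single 1 (1 : ℝ)

/-- The unit tangential vector at angle `t`. -/
def nn (t : ℝ) : E2 :=
  (-Real.sin t) • EuclideanSpace.single 0 (1 : ℝ) + Real.cos t • EuclideanSpace.single 1 (1 : ℝ)

lemma plane_avg (ρ : ℝ) (hρ : 0 < ρ) (h : E2 → ℂ)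
    (hc : ContinuousOn h (Metric.sphere 0 ρ)) :
    ((2 * Real.pi : ℝ) : ℂ) * ∫ z in Metric.sphere (0 : E2) ρ, h z ∂μH[1]
      = (((μH[1] : Measure ℂ) (Metric.sphere 0 ρ)).toReal : ℂ) *
        ∫ t in (0 : ℝ)..(2 * Real.pi), h (ρ • ee t) := by
  obtain ⟨g, hg⟩ := ContinuousMap.exists_restrict_eq Metric.isClosed_sphere
    (⟨_, hc.domRestrict⟩ : C(Metric.sphere (0 : E2) ρ, ℂ))
  have hgh : ∀ x ∈ Metric.sphere (0 : E2) ρ, g x = h x := by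
    intro x hx
    exact congrArg (fun k : C(Metric.sphere (0 : E2) ρ, ℂ) => k ⟨x, hx⟩) hg
  let φ := Complex.orthonormalBasisOneI.repr
  have hφ : ∀ t, φ (circleMap 0 ρ t) = ρ • ee t := by
    intro t
    ext i
    fin_cases i <;>
    simp [φ, ee, circleMap, Complex.exp_ofReal_mul_I_re, Complex.exp_ofReal_mul_I_im, Complex.orthonormalBasisOneI_repr_apply]
  have h1 := circle_avg ρ hρ (fun z => g (φ z)) (by fun_prop)
  have hmp := φ.toIsometryEquiv.measurePreserving_hausdorffMeasure 1
  have h2 := hmp.setIntegral_preimage_emb φ.toIsometryEquiv.toHomeomorph.measurableEmbedding g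
      (Metric.sphere 0 ρ)
  have h3 : φ.toIsometryEquiv ⁻¹' (Metric.sphere 0 ρ) = Metric.sphere 0 ρ := by
    ext z
    simp
  rw [h3] at h2
  rw [← setIntegral_congr_fun Metric.isClosed_sphere.measurableSet hgh, ← h2]
  refine h1.trans ?_
  congr 1
  apply intervalIntegral.integral_congr
  intro t _
  simp only
  rw [hgh, hφ]
  simp [abs_of_pos hρ]

lemma hasDerivAt_ee (t : ℝ) : HasDerivAt ee (nn t) t :=
  ((Real.hasDerivAt_cos t).smul_const _).add ((Real.hasDerivAt_sin t).smul_const _)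

lemma hasDerivAt_nn (t : ℝ) : HasDerivAt nn (-ee t) t := by
  have h := ((Real.hasDerivAt_sin t).neg.smul_const (EuclideanSpace.single (0 : Fin 2) (1 : ℝ))).add
    ((Real.hasDerivAt_cos t).smul_const (EuclideanSpace.single (1 : Fin 2) (1 : ℝ)))
  have e : -ee t = -Real.cos t • EuclideanSpace.single (0 : Fin 2) (1 : ℝ)
      + -Real.sin t • EuclideanSpace.single (1 : Fin 2) (1 : ℝ) := by
    simp only [ee]; module
  rw [e]
  exact h

lemma norm_ee (t : ℝ) : ‖ee t‖ = 1 := by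
  rw [EuclideanSpace.norm_eq]
  simp [ee, Fin.sum_univ_two]

lemma differentiable_ee : Differentiable ℝ ee := fun t => (hasDerivAt_ee t).differentiableAt

lemma differentiable_nn : Differentiable ℝ nn := fun t => (hasDerivAt_nn t).differentiableAt

lemma lap_polar (u : E2 → ℂ) (x : E2) (hx : DifferentiableAt ℝ (fderiv ℝ u) x) (t : ℝ) :
    fderiv ℝ (fderiv ℝ u) x (ee t) (ee t) + fderiv ℝ (fderiv ℝ u) x (nn t) (nn t) = lap u x := by
  have h : ∀ w, fderiv ℝ (fun y => fderiv ℝ u y w) x w = fderiv ℝ (fderiv ℝ u) x w w := by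
    intro w
    rw [fderiv_clm_apply hx (differentiableAt_const w)]
    simp
  have hcs : (Real.cos t : ℂ) ^ 2 + (Real.sin t : ℂ) ^ 2 = 1 := by
    exact_mod_cast Real.cos_sq_add_sin_sq t
  simp only [lap, Fin.sum_univ_two, h, ee, nn, map_add, map_smul, add_apply, smul_apply,
    Complex.real_smul, Complex.ofReal_neg]
  linear_combination (fderiv ℝ (fderiv ℝ u) x (EuclideanSpace.single 0 1)
    (EuclideanSpace.single 0 1) + fderiv ℝ (fderiv ℝ u) x (EuclideanSpace.single 1 1)
    (EuclideanSpace.single 1 1)) * hcs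

/-- Radial component of the flux in polar coordinates. -/
def fluxF (u v : E2 → ℂ) (p : ℝ × ℝ) : ℂ :=
  (p.1 : ℂ) * (v (p.1 • ee p.2) * fderiv ℝ u (p.1 • ee p.2) (ee p.2)
    - u (p.1 • ee p.2) * fderiv ℝ v (p.1 • ee p.2) (ee p.2))

/-- Angular component of the flux in polar coordinates. -/
def fluxG (u v : E2 → ℂ) (p : ℝ × ℝ) : ℂ :=
  v (p.1 • ee p.2) * fderiv ℝ u (p.1 • ee p.2) (nn p.2)
    - u (p.1 • ee p.2) * fderiv ℝ v (p.1 • ee p.2) (nn p.2)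

section

variable {u v : E2 → ℂ} {p : ℝ × ℝ}

lemma fluxF_differentiableAt
    (hu : DifferentiableAt ℝ u (p.1 • ee p.2)) (hv : DifferentiableAt ℝ v (p.1 • ee p.2))
    (hu2 : DifferentiableAt ℝ (fderiv ℝ u) (p.1 • ee p.2))
    (hv2 : DifferentiableAt ℝ (fderiv ℝ v) (p.1 • ee p.2)) :
    DifferentiableAt ℝ (fluxF u v) p := by
  have he : DifferentiableAt ℝ (fun q : ℝ × ℝ => ee q.2) p :=
    (differentiable_ee p.2).comp p differentiableAt_snd
  have hP : DifferentiableAt ℝ (fun q : ℝ × ℝ => q.1 • ee q.2) p := differentiableAt_fst.smul he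
  have h1 : DifferentiableAt ℝ (fun q : ℝ × ℝ => (q.1 : ℂ)) p :=
    Complex.ofRealCLM.differentiableAt.comp p differentiableAt_fst
  exact h1.mul (((DifferentiableAt.comp p hv hP).mul
    ((DifferentiableAt.comp p hu2 hP).clm_apply he)).sub
    ((DifferentiableAt.comp p hu hP).mul ((DifferentiableAt.comp p hv2 hP).clm_apply he)))

lemma fluxG_differentiableAt
    (hu : DifferentiableAt ℝ u (p.1 • ee p.2)) (hv : DifferentiableAt ℝ v (p.1 • ee p.2))
    (hu2 : DifferentiableAt ℝ (fderiv ℝ u) (p.1 • ee p.2))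
    (hv2 : DifferentiableAt ℝ (fderiv ℝ v) (p.1 • ee p.2)) :
    DifferentiableAt ℝ (fluxG u v) p := by
  have he : DifferentiableAt ℝ (fun q : ℝ × ℝ => ee q.2) p :=
    (differentiable_ee p.2).comp p differentiableAt_snd
  have hn : DifferentiableAt ℝ (fun q : ℝ × ℝ => nn q.2) p :=
    (differentiable_nn p.2).comp p differentiableAt_snd
  have hP : DifferentiableAt ℝ (fun q : ℝ × ℝ => q.1 • ee q.2) p := differentiableAt_fst.smul he
  exact ((DifferentiableAt.comp p hv hP).mul
    ((DifferentiableAt.comp p hu2 hP).clm_apply hn)).sub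
    ((DifferentiableAt.comp p hu hP).mul ((DifferentiableAt.comp p hv2 hP).clm_apply hn))

lemma flux_div
    (hu : DifferentiableAt ℝ u (p.1 • ee p.2)) (hv : DifferentiableAt ℝ v (p.1 • ee p.2))
    (hu2 : DifferentiableAt ℝ (fderiv ℝ u) (p.1 • ee p.2))
    (hv2 : DifferentiableAt ℝ (fderiv ℝ v) (p.1 • ee p.2)) :
    fderiv ℝ (fluxF u v) p (1, 0) + fderiv ℝ (fluxG u v) p (0, 1)
      = p.1 * (v (p.1 • ee p.2) * lap u (p.1 • ee p.2)
          - u (p.1 • ee p.2) * lap v (p.1 • ee p.2)) := by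
  obtain ⟨ρ, t⟩ := p
  simp only at hu hv hu2 hv2 ⊢
  rw [← lap_polar u _ hu2 t, ← lap_polar v _ hv2 t]
  -- radial derivative
  have hF : fderiv ℝ (fluxF u v) (ρ, t) (1, 0) =
      (v (ρ • ee t) * fderiv ℝ u (ρ • ee t) (ee t) - u (ρ • ee t) * fderiv ℝ v (ρ • ee t) (ee t))
      + ρ * (v (ρ • ee t) * fderiv ℝ (fderiv ℝ u) (ρ • ee t) (ee t) (ee t)
        - u (ρ • ee t) * fderiv ℝ (fderiv ℝ v) (ρ • ee t) (ee t) (ee t)) := by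
    have h1 : HasDerivAt (fun s : ℝ => (s, t)) ((1 : ℝ), (0 : ℝ)) ρ :=
      (hasDerivAt_id ρ).prodMk (hasDerivAt_const ρ t)
    have hd := (fluxF_differentiableAt (p := (ρ, t)) hu hv hu2 hv2).hasFDerivAt.comp_hasDerivAt ρ h1
    have hP : HasDerivAt (fun s : ℝ => s • ee t) (ee t) ρ := by
      simpa using (hasDerivAt_id ρ).smul_const (ee t)
    have hc : HasDerivAt (fun s : ℝ => (s : ℂ)) 1 ρ := by
      simpa using (hasDerivAt_id ρ).ofReal_comp
    have du : HasDerivAt (fun s : ℝ => u (s • ee t)) (fderiv ℝ u (ρ • ee t) (ee t)) ρ :=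
      HasFDerivAt.comp_hasDerivAt ρ hu.hasFDerivAt hP
    have dv : HasDerivAt (fun s : ℝ => v (s • ee t)) (fderiv ℝ v (ρ • ee t) (ee t)) ρ :=
      HasFDerivAt.comp_hasDerivAt ρ hv.hasFDerivAt hP
    have du1 : HasDerivAt (fun s : ℝ => fderiv ℝ u (s • ee t))
        (fderiv ℝ (fderiv ℝ u) (ρ • ee t) (ee t)) ρ :=
      HasFDerivAt.comp_hasDerivAt ρ hu2.hasFDerivAt hP
    have du2 : HasDerivAt (fun s : ℝ => fderiv ℝ u (s • ee t) (ee t))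
        (fderiv ℝ (fderiv ℝ u) (ρ • ee t) (ee t) (ee t) + fderiv ℝ u (ρ • ee t) (0)) ρ :=
      du1.clm_apply (hasDerivAt_const ρ (ee t))
    have dv1 : HasDerivAt (fun s : ℝ => fderiv ℝ v (s • ee t))
        (fderiv ℝ (fderiv ℝ v) (ρ • ee t) (ee t)) ρ :=
      HasFDerivAt.comp_hasDerivAt ρ hv2.hasFDerivAt hP
    have dv2 : HasDerivAt (fun s : ℝ => fderiv ℝ v (s • ee t) (ee t))
        (fderiv ℝ (fderiv ℝ v) (ρ • ee t) (ee t) (ee t) + fderiv ℝ v (ρ • ee t) (0)) ρ :=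
      dv1.clm_apply (hasDerivAt_const ρ (ee t))
    have hd2 := hc.fun_mul ((dv.fun_mul du2).fun_sub (du.fun_mul dv2))
    have := hd.unique hd2
    rw [this]
    simp only [map_zero, map_neg, map_smul, smul_apply, Complex.real_smul]
    ring
  have hG : fderiv ℝ (fluxG u v) (ρ, t) (0, 1) =
      -(v (ρ • ee t) * fderiv ℝ u (ρ • ee t) (ee t) - u (ρ • ee t) * fderiv ℝ v (ρ • ee t) (ee t))
      + ρ * (v (ρ • ee t) * fderiv ℝ (fderiv ℝ u) (ρ • ee t) (nn t) (nn t)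
        - u (ρ • ee t) * fderiv ℝ (fderiv ℝ v) (ρ • ee t) (nn t) (nn t)) := by
    have h1 : HasDerivAt (fun s : ℝ => (ρ, s)) ((0 : ℝ), (1 : ℝ)) t :=
      (hasDerivAt_const t ρ).prodMk (hasDerivAt_id t)
    have hd := (fluxG_differentiableAt (p := (ρ, t)) hu hv hu2 hv2).hasFDerivAt.comp_hasDerivAt t h1
    have hP : HasDerivAt (fun s : ℝ => ρ • ee s) (ρ • nn t) t := (hasDerivAt_ee t).const_smul ρ
    have du : HasDerivAt (fun s : ℝ => u (ρ • ee s)) (fderiv ℝ u (ρ • ee t) (ρ • nn t)) t :=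
      HasFDerivAt.comp_hasDerivAt t hu.hasFDerivAt hP
    have dv : HasDerivAt (fun s : ℝ => v (ρ • ee s)) (fderiv ℝ v (ρ • ee t) (ρ • nn t)) t :=
      HasFDerivAt.comp_hasDerivAt t hv.hasFDerivAt hP
    have du1 : HasDerivAt (fun s : ℝ => fderiv ℝ u (ρ • ee s))
        (fderiv ℝ (fderiv ℝ u) (ρ • ee t) (ρ • nn t)) t :=
      HasFDerivAt.comp_hasDerivAt t hu2.hasFDerivAt hP
    have du2 : HasDerivAt (fun s : ℝ => fderiv ℝ u (ρ • ee s) (nn s))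
        (fderiv ℝ (fderiv ℝ u) (ρ • ee t) (ρ • nn t) (nn t) + fderiv ℝ u (ρ • ee t) (-ee t)) t :=
      du1.clm_apply (hasDerivAt_nn t)
    have dv1 : HasDerivAt (fun s : ℝ => fderiv ℝ v (ρ • ee s))
        (fderiv ℝ (fderiv ℝ v) (ρ • ee t) (ρ • nn t)) t :=
      HasFDerivAt.comp_hasDerivAt t hv2.hasFDerivAt hP
    have dv2 : HasDerivAt (fun s : ℝ => fderiv ℝ v (ρ • ee s) (nn s))
        (fderiv ℝ (fderiv ℝ v) (ρ • ee t) (ρ • nn t) (nn t) + fderiv ℝ v (ρ • ee t) (-ee t)) t :=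
      dv1.clm_apply (hasDerivAt_nn t)
    have hd2 := (dv.fun_mul du2).fun_sub (du.fun_mul dv2)
    have := hd.unique hd2
    rw [this]
    simp only [map_zero, map_neg, map_smul, smul_apply, Complex.real_smul]
    ring
  rw [hF, hG]
  ring

end

/-- If `u, v` are `C²` solutions of the Helmholtz equation `(−Δ − λ²)w = 0`
on a neighbourhood of the closed annulus `{r ≤ |x| ≤ R}`, then the flux pairing
`∫_{∂B(0,ρ)} (v ∂_ρ u − u ∂_ρ v) ds` is the same for `ρ = r` and `ρ = R`. -/
theorem flux_pairing_radius_independent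
    (r R : ℝ) (hr : 0 < r) (hrR : r < R) (lam : ℝ)
    (u v : E2 → ℂ) (U : Set E2) (hU : IsOpen U)
    (hUsub : {x : E2 | r ≤ ‖x‖ ∧ ‖x‖ ≤ R} ⊆ U)
    (hu : ContDiffOn ℝ 2 u U) (hv : ContDiffOn ℝ 2 v U)
    (hueq : ∀ x ∈ U, -lap u x - (lam : ℂ) ^ 2 * u x = 0)
    (hveq : ∀ x ∈ U, -lap v x - (lam : ℂ) ^ 2 * v x = 0) :
    (∫ x in Metric.sphere (0 : E2) R, (v x * rderiv u x - u x * rderiv v x) ∂μH[1])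
      = ∫ x in Metric.sphere (0 : E2) r, (v x * rderiv u x - u x * rderiv v x) ∂μH[1] := by
  have hR : 0 < R := hr.trans hrR
  have hpi : (0 : ℝ) ≤ 2 * Real.pi := by positivity
  have reg : ∀ w : E2 → ℂ, ContDiffOn ℝ 2 w U → ∀ x ∈ U,
      DifferentiableAt ℝ w x ∧ DifferentiableAt ℝ (fderiv ℝ w) x := by
    intro w hw x hx
    have h := hw.contDiffAt (hU.mem_nhds hx)
    exact ⟨h.differentiableAt (by norm_num),
      (h.fderiv_right (m := 1) (by norm_num)).differentiableAt (by norm_num)⟩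
  have hmem : ∀ p : ℝ × ℝ, r ≤ p.1 → p.1 ≤ R → p.1 • ee p.2 ∈ U := by
    intro p h1 h2
    apply hUsub
    have : ‖p.1 • ee p.2‖ = p.1 := by
      rw [norm_smul, norm_ee, mul_one, Real.norm_of_nonneg (hr.le.trans h1)]
    simp only [Set.mem_ofPred_eq, this]
    exact ⟨h1, h2⟩
  have hF : ∀ p : ℝ × ℝ, r ≤ p.1 → p.1 ≤ R → DifferentiableAt ℝ (fluxF u v) p :=
    fun p h1 h2 => fluxF_differentiableAt (reg u hu _ (hmem p h1 h2)).1
      (reg v hv _ (hmem p h1 h2)).1 (reg u hu _ (hmem p h1 h2)).2 (reg v hv _ (hmem p h1 h2)).2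
  have hG : ∀ p : ℝ × ℝ, r ≤ p.1 → p.1 ≤ R → DifferentiableAt ℝ (fluxG u v) p :=
    fun p h1 h2 => fluxG_differentiableAt (reg u hu _ (hmem p h1 h2)).1
      (reg v hv _ (hmem p h1 h2)).1 (reg u hu _ (hmem p h1 h2)).2 (reg v hv _ (hmem p h1 h2)).2
  have hdiv : ∀ p : ℝ × ℝ, r ≤ p.1 → p.1 ≤ R →
      fderiv ℝ (fluxF u v) p (1, 0) + fderiv ℝ (fluxG u v) p (0, 1) = 0 := by
    intro p h1 h2
    have hx := hmem p h1 h2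
    rw [flux_div (reg u hu _ hx).1 (reg v hv _ hx).1 (reg u hu _ hx).2 (reg v hv _ hx).2]
    linear_combination (p.1 : ℂ) * (u (p.1 • ee p.2) * hveq _ hx - v (p.1 • ee p.2) * hueq _ hx)
  have key := integral2_divergence_prod_of_hasFDerivAt (fluxF u v) (fluxG u v)
    (fderiv ℝ (fluxF u v)) (fderiv ℝ (fluxG u v)) r 0 R (2 * Real.pi)
    (by
      rw [Set.uIcc_of_le hrR.le]
      exact fun p hp => (hF p hp.1.1 hp.1.2).continuousAt.continuousWithinAt)
    (by
      rw [Set.uIcc_of_le hrR.le]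
      exact fun p hp => (hG p hp.1.1 hp.1.2).continuousAt.continuousWithinAt)
    (by
      rw [min_eq_left hrR.le, max_eq_right hrR.le]
      exact fun p hp => (hF p hp.1.1.le hp.1.2.le).hasFDerivAt)
    (by
      rw [min_eq_left hrR.le, max_eq_right hrR.le]
      exact fun p hp => (hG p hp.1.1.le hp.1.2.le).hasFDerivAt)
    (by
      rw [Set.uIcc_of_le hrR.le]
      refine (integrableOn_zero (ε' := ℂ)).congr_fun (fun p hp => (hdiv p hp.1.1 hp.1.2).symm) ?_
      exact measurableSet_Icc.prod measurableSet_uIcc)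
  have hz : (∫ x in r..R, ∫ y in (0 : ℝ)..(2 * Real.pi),
      fderiv ℝ (fluxF u v) (x, y) (1, 0) + fderiv ℝ (fluxG u v) (x, y) (0, 1)) = 0 := by
    rw [intervalIntegral.integral_congr (g := fun _ => (0 : ℂ))]
    · simp
    · intro x hx
      rw [Set.uIcc_of_le hrR.le] at hx
      simp only [hdiv (x, _) hx.1 hx.2, intervalIntegral.integral_zero]
  have hper : ∀ x, fluxG u v (x, 2 * Real.pi) = fluxG u v (x, 0) := by
    intro x
    simp [fluxG, ee, nn]
  rw [hz] at key
  simp only [hper, sub_self, zero_add] at key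
  -- reduction of the circle integrals
  have red : ∀ ρ, r ≤ ρ → ρ ≤ R →
      ((2 * Real.pi : ℝ) : ℂ) *
        ∫ x in Metric.sphere (0 : E2) ρ, (v x * rderiv u x - u x * rderiv v x) ∂μH[1]
      = (((μH[1] : Measure ℂ) (Metric.sphere 0 r)).toReal / r : ℂ) *
        ∫ t in (0 : ℝ)..(2 * Real.pi), fluxF u v (ρ, t) := by
    intro ρ h1 h2
    have hρ : 0 < ρ := hr.trans_le h1
    rw [plane_avg ρ hρ, circle_scale r ρ hr hρ]
    · have : ∀ t, fluxF u v (ρ, t) = (ρ : ℂ) * (v (ρ • ee t) * rderiv u (ρ • ee t)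
          - u (ρ • ee t) * rderiv v (ρ • ee t)) := by
        intro t
        have e : ‖ρ • ee t‖⁻¹ • ρ • ee t = ee t := by
          rw [norm_smul, norm_ee, mul_one, Real.norm_of_nonneg hρ.le, smul_smul,
            inv_mul_cancel₀ hρ.ne', one_smul]
        simp only [fluxF, rderiv, e]
      simp only [this, intervalIntegral.integral_const_mul]
      push_cast
      ring
    · intro x hx
      have hx' : ‖x‖ = ρ := by simpa using hx
      have hxU : x ∈ U := hUsub ⟨by rw [hx']; exact h1, by rw [hx']; exact h2⟩
      have hn : ContinuousAt (fun y : E2 => ‖y‖⁻¹ • y) x := by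
        have : ‖x‖ ≠ 0 := by rw [hx']; exact hρ.ne'
        exact (continuous_norm.continuousAt.inv₀ this).smul continuousAt_id
      have hru : ContinuousAt (rderiv u) x := (reg u hu x hxU).2.continuousAt.clm_apply hn
      have hrv : ContinuousAt (rderiv v) x := (reg v hv x hxU).2.continuousAt.clm_apply hn
      exact (((reg v hv x hxU).1.continuousAt.mul hru).sub
        ((reg u hu x hxU).1.continuousAt.mul hrv)).continuousWithinAt
  have hne : ((2 * Real.pi : ℝ) : ℂ) ≠ 0 := by
    exact_mod_cast (by positivity : (2 * Real.pi : ℝ) ≠ 0)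
  apply mul_left_cancel₀ hne
  rw [red R hrR.le le_rfl, red r le_rfl hrR.le, ← sub_eq_zero.mp key.symm]

end
end

section
/- For n ∈ ℤ and x ∈ ℝ, define the Bessel function J_n(x) := (1/(2π)) ∫_{−π}^{π} e^{i(x sin τ − n τ)} dτ. Then for all x, φ ∈ ℝ, the Jacobi–Anger expansion holds: e^{i x cos φ} = Σ_{n ∈ ℤ} i^n J_n(x) e^{i n φ}, where the series converges absolutely; equivalently, e^{i x cos φ} = Σ_{n=0}^{∞} δ_n · 2 · i^n J_n(x) cos(n φ) with δ_0 = 1/2 and δ_n = 1 for n ≥ 1. -/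
open MeasureTheory

noncomputable section

/-- The Bessel function of integer order:
`J_n(x) := (1/(2π)) ∫_{−π}^{π} e^{i(x sin τ − n τ)} dτ`. -/
noncomputable def besselJ (n : ℤ) (x : ℝ) : ℂ :=
  (1 / (2 * Real.pi)) *
    ∫ τ in (-Real.pi)..Real.pi,
      Complex.exp (Complex.I * ((x * Real.sin τ : ℝ) - (n * τ : ℝ)))

/-- The integrand of the Bessel integral. -/
def bker (x : ℝ) (n : ℤ) (τ : ℝ) : ℂ :=
  Complex.exp (Complex.I * ((x * Real.sin τ : ℝ) - (n * τ : ℝ)))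

lemma besselJ_eq (n : ℤ) (x : ℝ) :
    besselJ n x = (1 / (2 * Real.pi)) * ∫ τ in (-Real.pi)..Real.pi, bker x n τ := rfl

lemma bker_cont (x : ℝ) (n : ℤ) : Continuous (bker x n) := by
  unfold bker; fun_prop

lemma bker_norm (x : ℝ) (n : ℤ) (τ : ℝ) : ‖bker x n τ‖ = 1 := by
  unfold bker
  rw [← Complex.ofReal_sub, mul_comm, Complex.norm_exp_ofReal_mul_I]

lemma besselJ_norm_le (n : ℤ) (x : ℝ) : ‖besselJ n x‖ ≤ 1 := by
  have h := intervalIntegral.norm_integral_le_of_norm_le_const (a := -Real.pi) (b := Real.pi)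
    (f := bker x n) (C := 1) (fun τ _ => (bker_norm x n τ).le)
  have hp := Real.pi_pos
  rw [besselJ_eq, norm_mul]
  have h1 : ‖(1 / (2 * Real.pi) : ℂ)‖ = 1 / (2 * Real.pi) := by
    rw [show (1 / (2 * Real.pi) : ℂ) = ((1 / (2 * Real.pi) : ℝ) : ℂ) by push_cast; ring,
      Complex.norm_real, Real.norm_of_nonneg (by positivity)]
  rw [h1]
  rw [show Real.pi - -Real.pi = 2 * Real.pi by ring, abs_of_pos (by positivity), one_mul] at h
  rw [div_mul_eq_mul_div, one_mul, div_le_one (by positivity)]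
  exact h

lemma bker_shift (x : ℝ) (n k : ℤ) (τ : ℝ) :
    bker x (n + k) τ = bker x n τ * Complex.exp (-(k * τ * Complex.I)) := by
  unfold bker
  rw [← Complex.exp_add]
  congr 1
  push_cast
  ring

lemma bker_periodic (x : ℝ) (n : ℤ) : Function.Periodic (bker x n) (2 * Real.pi) := by
  intro τ
  unfold bker
  rw [Real.sin_add_two_pi, Complex.exp_eq_exp_iff_exists_int]
  refine ⟨-n, ?_⟩
  push_cast
  ring

lemma bker_deriv (x : ℝ) (n : ℤ) (τ : ℝ) :
    HasDerivAt (bker x n)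
      (Complex.I * ((x / 2) * (bker x (n - 1) τ + bker x (n + 1) τ) - n * bker x n τ)) τ := by
  have h1 : HasDerivAt (fun τ : ℝ => x * Real.sin τ - n * τ) (x * Real.cos τ - n) τ := by
    have h0 := ((Real.hasDerivAt_sin τ).const_mul x).sub ((hasDerivAt_id τ).const_mul (n : ℝ))
    rw [mul_one] at h0
    exact h0
  have h2 := (h1.ofReal_comp.const_mul Complex.I).cexp
  have h3 : bker x n = fun τ : ℝ =>
      Complex.exp (Complex.I * ((x * Real.sin τ - n * τ : ℝ) : ℂ)) := by
    funext t; unfold bker; push_cast; rfl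
  rw [← h3] at h2
  convert h2 using 1
  have h4 := congrFun h3 τ
  rw [← h4, sub_eq_add_neg n 1, bker_shift, bker_shift]
  push_cast
  rw [Complex.cos]
  ring_nf

lemma bessel_rec (n : ℤ) (x : ℝ) :
    n * besselJ n x = (x / 2) * (besselJ (n - 1) x + besselJ (n + 1) x) := by
  have hi : ∀ m, IntervalIntegrable (bker x m) volume (-Real.pi) Real.pi :=
    fun m => (bker_cont x m).intervalIntegrable _ _
  have h := intervalIntegral.integral_eq_sub_of_hasDerivAt (a := -Real.pi) (b := Real.pi)
    (fun τ _ => bker_deriv x n τ)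
    (by
      apply Continuous.intervalIntegrable
      have := bker_cont x n
      have := bker_cont x (n - 1)
      have := bker_cont x (n + 1)
      fun_prop)
  have hp : bker x n Real.pi = bker x n (-Real.pi) := by
    have := bker_periodic x n (-Real.pi)
    rw [← this]; congr 1; ring
  rw [hp, sub_self, intervalIntegral.integral_const_mul,
    intervalIntegral.integral_sub (((hi _).add (hi _)).const_mul _) ((hi _).const_mul _),
    intervalIntegral.integral_const_mul, intervalIntegral.integral_const_mul,
    intervalIntegral.integral_add (hi _) (hi _)] at h
  have h' := (mul_eq_zero.mp h).resolve_left Complex.I_ne_zero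
  rw [besselJ_eq, besselJ_eq, besselJ_eq]
  linear_combination (-(1 / (2 * Real.pi) : ℂ)) * h'

lemma bessel_bound1 (n : ℤ) (x : ℝ) : ‖(n : ℂ) * besselJ n x‖ ≤ |x| := by
  rw [bessel_rec, norm_mul]
  have h1 : ‖(x / 2 : ℂ)‖ = |x| / 2 := by simp
  have h2 := norm_add_le (besselJ (n - 1) x) (besselJ (n + 1) x)
  have h3 := besselJ_norm_le (n - 1) x
  have h4 := besselJ_norm_le (n + 1) x
  rw [h1]
  nlinarith [abs_nonneg x]

lemma bessel_bound2 (n : ℤ) (x : ℝ) : ‖(n : ℂ) * (n * besselJ n x)‖ ≤ |x| * (|x| + 1) := by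
  have e : (n : ℂ) * (n * besselJ n x) = (x / 2) *
      ((((n - 1 : ℤ) : ℂ) * besselJ (n - 1) x + besselJ (n - 1) x) +
        (((n + 1 : ℤ) : ℂ) * besselJ (n + 1) x - besselJ (n + 1) x)) := by
    rw [bessel_rec]; push_cast; ring
  rw [e, norm_mul]
  have h1 : ‖(x / 2 : ℂ)‖ = |x| / 2 := by simp
  rw [h1]
  have a1 := norm_add_le (((n - 1 : ℤ) : ℂ) * besselJ (n - 1) x + besselJ (n - 1) x)
    (((n + 1 : ℤ) : ℂ) * besselJ (n + 1) x - besselJ (n + 1) x)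
  have a2 := norm_add_le (((n - 1 : ℤ) : ℂ) * besselJ (n - 1) x) (besselJ (n - 1) x)
  have a3 := norm_sub_le (((n + 1 : ℤ) : ℂ) * besselJ (n + 1) x) (besselJ (n + 1) x)
  have h3 := besselJ_norm_le (n - 1) x
  have h4 := besselJ_norm_le (n + 1) x
  have h5 := bessel_bound1 (n - 1) x
  have h6 := bessel_bound1 (n + 1) x
  have h7 : ‖(((n - 1 : ℤ) : ℂ) * besselJ (n - 1) x + besselJ (n - 1) x) +
        (((n + 1 : ℤ) : ℂ) * besselJ (n + 1) x - besselJ (n + 1) x)‖ ≤ 2 * (|x| + 1) := by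
    linarith
  nlinarith [abs_nonneg x]

lemma bessel_summable (x : ℝ) : Summable (fun n : ℤ => besselJ n x) := by
  have hs : Summable (fun n : ℤ => |x| * (|x| + 1) * (1 / (n : ℝ) ^ 2)) :=
    (Real.summable_one_div_int_pow.mpr (by norm_num)).mul_left _
  refine hs.of_norm_bounded_eventually ?_
  have : ∀ᶠ n : ℤ in Filter.cofinite, n ≠ 0 :=
    (Set.finite_singleton (0 : ℤ)).eventually_cofinite_notMem
  filter_upwards [this] with n hn
  have hb := bessel_bound2 n x
  have hn' : (0 : ℝ) < (n : ℝ) ^ 2 := by positivity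
  rw [mul_one_div, le_div_iff₀ hn']
  rw [norm_mul, norm_mul, Complex.norm_intCast] at hb
  rw [← sq_abs (n : ℝ)]
  linarith

lemma bessel_neg (n : ℤ) (x : ℝ) :
    Complex.I ^ (-n) * besselJ (-n) x = Complex.I ^ n * besselJ n x := by
  have h1 : ∀ τ : ℝ, bker x (-n) (Real.pi - τ) = (-1) ^ n * bker x n τ := by
    intro τ
    have : ((-1 : ℂ)) ^ n = Complex.exp (n * (Real.pi * Complex.I)) := by
      rw [Complex.exp_int_mul, Complex.exp_pi_mul_I]
    rw [this]
    unfold bker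
    rw [← Complex.exp_add, Real.sin_pi_sub]
    congr 1
    push_cast
    ring
  have h2 := intervalIntegral.integral_comp_sub_left (a := -Real.pi) (b := Real.pi)
    (bker x (-n)) Real.pi
  have h3 := (bker_periodic x (-n)).intervalIntegral_add_eq 0 (-Real.pi)
  rw [show Real.pi - Real.pi = 0 by ring, show Real.pi - -Real.pi = 0 + 2 * Real.pi by ring, h3,
    show -Real.pi + 2 * Real.pi = Real.pi by ring] at h2
  simp only [h1, intervalIntegral.integral_const_mul] at h2
  rw [besselJ_eq, besselJ_eq, ← h2]
  have h4 : Complex.I ^ (-n) * (-1) ^ n = Complex.I ^ n := by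
    rw [zpow_neg, ← inv_zpow, ← mul_zpow, Complex.inv_I]
    simp
  rw [← h4]
  ring

lemma bessel_fourier (x θ : ℝ) :
    HasSum (fun n : ℤ => besselJ n x * Complex.exp (Complex.I * ((n : ℝ) * θ : ℝ)))
      (Complex.exp (Complex.I * ((x * Real.sin θ : ℝ) : ℂ))) := by
  have : Fact (0 < 2 * Real.pi) := ⟨by positivity⟩
  let f : C(AddCircle (2 * Real.pi), ℂ) :=
    ⟨fun t => Complex.exp (Complex.I * ((x * Real.Angle.sin t : ℝ) : ℂ)), by
      have h : Continuous (fun t : AddCircle (2 * Real.pi) => Real.Angle.sin t) :=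
        Real.Angle.continuous_sin
      fun_prop⟩
  have hf : ∀ t : ℝ, f (t : AddCircle (2 * Real.pi)) =
      Complex.exp (Complex.I * ((x * Real.sin t : ℝ) : ℂ)) := fun t => rfl
  have hpi : (Real.pi : ℂ) ≠ 0 := by exact_mod_cast Real.pi_ne_zero
  have hF : ∀ (n : ℤ) (t : ℝ), fourier n (t : AddCircle (2 * Real.pi)) =
      Complex.exp (Complex.I * ((n : ℝ) * t : ℝ)) := by
    intro n t
    rw [fourier_coe_apply]
    congr 1
    push_cast
    field_simp
  have hc : fourierCoeff f = fun n : ℤ => besselJ n x := by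
    funext n
    rw [fourierCoeff_eq_intervalIntegral _ n (-Real.pi),
      show -Real.pi + 2 * Real.pi = Real.pi by ring, besselJ_eq, Complex.real_smul]
    push_cast
    congr 1
    apply intervalIntegral.integral_congr
    intro t _
    simp only [hF, hf, smul_eq_mul]
    unfold bker
    rw [← Complex.exp_add]
    congr 1
    push_cast
    ring
  have h := has_pointwise_sum_fourier_series_of_summable (f := f)
    (by rw [hc]; exact bessel_summable x) (θ : AddCircle (2 * Real.pi))
  simpa only [hc, hF, hf, smul_eq_mul] using h

/-- The Jacobi–Anger expansion: `e^{ix cos φ} = Σ_{n∈ℤ} iⁿ J_n(x) e^{inφ}` (the series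
converging absolutely, which in `ℂ` is expressed by unconditional summability `HasSum`),
and equivalently `e^{ix cos φ} = Σ_{n≥0} δ_n 2 iⁿ J_n(x) cos(nφ)` with `δ_0 = 1/2`,
`δ_n = 1` for `n ≥ 1`. -/
theorem jacobi_anger (x φ : ℝ) :
    HasSum (fun n : ℤ =>
        Complex.I ^ n * besselJ n x * Complex.exp (Complex.I * ((n : ℝ) * φ : ℝ)))
      (Complex.exp (Complex.I * ((x * Real.cos φ : ℝ) : ℂ))) ∧
    HasSum (fun n : ℕ =>
        (if n = 0 then (1 / 2 : ℂ) else 1) * 2 * Complex.I ^ (n : ℤ) * besselJ n x *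
          ((Real.cos ((n : ℝ) * φ) : ℝ) : ℂ))
      (Complex.exp (Complex.I * ((x * Real.cos φ : ℝ) : ℂ))) := by
  have key : HasSum (fun n : ℤ =>
        Complex.I ^ n * besselJ n x * Complex.exp (Complex.I * ((n : ℝ) * φ : ℝ)))
      (Complex.exp (Complex.I * ((x * Real.cos φ : ℝ) : ℂ))) := by
    have h := bessel_fourier x (φ + Real.pi / 2)
    rw [Real.sin_add_pi_div_two] at h
    convert h using 1
    funext n
    have hI : Complex.I ^ n = Complex.exp (n * (Real.pi / 2 * Complex.I)) := by
      rw [Complex.exp_int_mul, Complex.exp_pi_div_two_mul_I]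
    rw [hI, mul_comm (Complex.exp _) (besselJ n x), mul_assoc, ← Complex.exp_add]
    congr 2
    push_cast
    ring
  refine ⟨key, ?_⟩
  have h := key.nat_add_neg.sub (hasSum_ite_eq (0 : ℕ) (besselJ 0 x))
  have e1 : Complex.exp (Complex.I * ((x * Real.cos φ : ℝ) : ℂ)) +
      Complex.I ^ (0 : ℤ) * besselJ 0 x * Complex.exp (Complex.I * (((0 : ℤ) : ℝ) * φ : ℝ)) -
      besselJ 0 x = Complex.exp (Complex.I * ((x * Real.cos φ : ℝ) : ℂ)) := by
    simp
  rw [e1] at h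
  refine Eq.mp (congrArg (fun F : ℕ → ℂ => HasSum F _) ?_) h
  funext n
  symm
  rw [bessel_neg]
  by_cases hn : n = 0
  · subst hn
    simp
  · simp only [hn, if_false]
    push_cast
    rw [Complex.cos]
    ring_nf

end
end

section
/- For n ∈ ℤ and x ∈ ℝ, define the Bessel function J_n(x) := (1/(2π)) ∫_{−π}^{π} e^{i(x sin τ − n τ)} dτ. Then for each fixed n ≥ 0, as x → +∞, J_n(x) = √(2/(πx)) cos(x − nπ/2 − π/4) + O(x^{−3/2}). -/
open MeasureTheory

noncomputable section

section helpers
open Filter Topology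

lemma vdc (g g' : ℝ → ℝ) (K : ℝ)
    (hg : ∀ s ∈ Set.Icc 0 Real.pi, HasDerivAt g (g' s) s)
    (hc : ContinuousOn g' (Set.Icc 0 Real.pi))
    (hK : ∀ s ∈ Set.Icc 0 Real.pi, |g s| ≤ K) (hK' : ∀ s ∈ Set.Icc 0 Real.pi, |g' s| ≤ K)
    (x d : ℝ) (hx : 0 < x) (hd : 0 < d) (hd1 : d ≤ 1) :
    ‖∫ s in (0:ℝ)..Real.pi, Complex.exp (Complex.I * (x * Real.cos s : ℝ)) * (g s : ℂ)‖
      ≤ 2 * K * d + 10 * K / (x * d) := by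
  have hpi := Real.pi_gt_three
  have hpi4 := Real.pi_lt_four
  have hK0 : 0 ≤ K := (abs_nonneg _).trans (hK 0 ⟨le_rfl, Real.pi_pos.le⟩)
  set f : ℝ → ℂ := fun s => Complex.exp (Complex.I * (x * Real.cos s : ℝ)) * (g s : ℂ) with hf
  have hgc : ContinuousOn g (Set.Icc 0 Real.pi) := fun s hs => (hg s hs).continuousAt.continuousWithinAt
  have hen : ∀ s : ℝ, ‖Complex.exp (Complex.I * (x * Real.cos s : ℝ))‖ = 1 := by
    intro s; rw [mul_comm]; exact Complex.norm_exp_ofReal_mul_I _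
  have hfc : ContinuousOn f (Set.Icc 0 Real.pi) := by
    apply ContinuousOn.mul
    · exact Continuous.continuousOn (by fun_prop)
    · exact Complex.continuous_ofReal.comp_continuousOn hgc
  have hfn : ∀ s ∈ Set.Icc 0 Real.pi, ‖f s‖ ≤ K := by
    intro s hs
    simp only [hf, norm_mul, hen, one_mul, Complex.norm_real]
    exact hK s hs
  have hint : ∀ a b, 0 ≤ a → a ≤ b → b ≤ Real.pi → IntervalIntegrable f volume a b := by
    intro a b ha hab hb
    apply ContinuousOn.intervalIntegrable
    rw [Set.uIcc_of_le hab]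
    exact hfc.mono (Set.Icc_subset_Icc ha hb)
  have hsplit : (∫ s in (0:ℝ)..Real.pi, f s) = (∫ s in (0:ℝ)..d, f s) +
      (∫ s in d..(Real.pi - d), f s) + ∫ s in (Real.pi - d)..Real.pi, f s := by
    rw [intervalIntegral.integral_add_adjacent_intervals, intervalIntegral.integral_add_adjacent_intervals]
    all_goals apply hint <;> linarith
  have h1 : ‖∫ s in (0:ℝ)..d, f s‖ ≤ K * d := by
    have := intervalIntegral.norm_integral_le_of_norm_le_const (a := 0) (b := d) (f := f) (C := K) ?_
    · simpa [abs_of_pos hd] using this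
    · intro s hs
      rw [Set.uIoc_of_le hd.le] at hs
      exact hfn s ⟨hs.1.le, by linarith [hs.2]⟩
  have h3 : ‖∫ s in (Real.pi - d)..Real.pi, f s‖ ≤ K * d := by
    have := intervalIntegral.norm_integral_le_of_norm_le_const (a := Real.pi - d) (b := Real.pi) (f := f) (C := K) ?_
    · simpa [abs_of_pos hd] using this
    · intro s hs
      rw [Set.uIoc_of_le (by linarith)] at hs
      exact hfn s ⟨by linarith [hs.1], hs.2⟩
  have hsin : 0 < Real.sin d := Real.sin_pos_of_pos_of_lt_pi hd (by linarith)
  have h2 : ‖∫ s in d..(Real.pi - d), f s‖ ≤ 6 * K / Real.sin d / x := by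
    have hle : d ≤ Real.pi - d := by linarith
    have hsub : ∀ s ∈ Set.Icc d (Real.pi - d), s ∈ Set.Icc 0 Real.pi := fun s hs =>
      ⟨by linarith [hs.1], by linarith [hs.2]⟩
    have hsp : ∀ s ∈ Set.Icc d (Real.pi - d), 0 < Real.sin s := fun s hs =>
      Real.sin_pos_of_pos_of_lt_pi (by linarith [hs.1]) (by linarith [hs.2])
    set h' : ℝ → ℝ := fun s => (g' s * Real.sin s - g s * Real.cos s) / Real.sin s ^ 2 with hh'
    set F : ℝ → ℂ := fun s => Complex.exp (Complex.I * (x * Real.cos s : ℝ)) * ((g s / Real.sin s : ℝ) : ℂ) with hF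
    set R : ℝ → ℂ := fun s => Complex.exp (Complex.I * (x * Real.cos s : ℝ)) * (h' s : ℂ) with hR
    have hh'c : ContinuousOn h' (Set.Icc d (Real.pi - d)) := by
      apply ContinuousOn.div
      · apply ContinuousOn.sub
        · exact (hc.mono hsub).mul Real.continuous_sin.continuousOn
        · exact (hgc.mono hsub).mul Real.continuous_cos.continuousOn
      · fun_prop
      · intro s hs; exact pow_ne_zero _ (hsp s hs).ne'
    have hRc : ContinuousOn R (Set.Icc d (Real.pi - d)) := by
      apply ContinuousOn.mul
      · exact Continuous.continuousOn (by fun_prop)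
      · exact Complex.continuous_ofReal.comp_continuousOn hh'c
    have hRi : IntervalIntegrable R volume d (Real.pi - d) := by
      apply ContinuousOn.intervalIntegrable
      rwa [Set.uIcc_of_le hle]
    have hfi := hint d (Real.pi - d) hd.le hle (by linarith)
    have hder : ∀ s ∈ Set.uIcc d (Real.pi - d), HasDerivAt F (-(Complex.I * x) * f s + R s) s := by
      intro s hs
      rw [Set.uIcc_of_le hle] at hs
      have hs0 := (hsp s hs).ne'
      have e1 := ((hg s (hsub s hs)).div (Real.hasDerivAt_sin s) hs0).ofReal_comp
      have e2 := ((((Real.hasDerivAt_cos s).const_mul x).ofReal_comp).const_mul Complex.I).cexp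
      have := e2.mul e1
      refine this.congr_deriv ?_
      simp only [hf, hR, hh', Pi.div_apply]
      have : (Complex.sin s) ≠ 0 := by exact_mod_cast hs0
      push_cast
      field_simp
    have hftc := intervalIntegral.integral_eq_sub_of_hasDerivAt hder
      ((hfi.const_mul _).add hRi)
    rw [intervalIntegral.integral_add (hfi.const_mul _) hRi, intervalIntegral.integral_const_mul] at hftc
    have hFn : ∀ s ∈ Set.Icc d (Real.pi - d), Real.sin s = Real.sin d → ‖F s‖ ≤ K / Real.sin d := by
      intro s hs he
      simp only [hF, norm_mul, hen, one_mul, Complex.norm_real, norm_div, he, Real.norm_eq_abs, abs_of_pos hsin]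
      gcongr
      exact hK s (hsub s hs)
    have hRn : ‖∫ s in d..(Real.pi - d), R s‖ ≤ 4 * K / Real.sin d := by
      have hcsc : ∀ s ∈ Set.uIcc d (Real.pi - d), HasDerivAt (fun s => - (2 * K) * (Real.cos s / Real.sin s)) (2 * K / Real.sin s ^ 2) s := by
        intro s hs
        rw [Set.uIcc_of_le hle] at hs
        have hs0 := (hsp s hs).ne'
        have := ((Real.hasDerivAt_cos s).div (Real.hasDerivAt_sin s) hs0).const_mul (-(2*K))
        refine this.congr_deriv ?_
        rw [show -Real.sin s * Real.sin s - Real.cos s * Real.cos s = -1 by linear_combination (-1) * Real.sin_sq_add_cos_sq s]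
        ring
      have hci : IntervalIntegrable (fun s => 2 * K / Real.sin s ^ 2) volume d (Real.pi - d) := by
        apply ContinuousOn.intervalIntegrable
        rw [Set.uIcc_of_le hle]
        apply ContinuousOn.div (by fun_prop) (by fun_prop)
        intro s hs; exact pow_ne_zero _ (hsp s hs).ne'
      have hv := intervalIntegral.integral_eq_sub_of_hasDerivAt hcsc hci
      have hb : ‖∫ s in d..(Real.pi - d), R s‖ ≤ ∫ s in d..(Real.pi - d), 2 * K / Real.sin s ^ 2 := by
        apply intervalIntegral.norm_integral_le_of_norm_le hle _ hci
        refine Filter.Eventually.of_forall fun s hs => ?_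
        have hs' : s ∈ Set.Icc d (Real.pi - d) := ⟨hs.1.le, hs.2⟩
        have hp := hsp s hs'
        simp only [hR, hh', norm_mul, hen, one_mul, Complex.norm_real, norm_div, Real.norm_eq_abs, abs_pow, sq_abs]
        gcongr
        have a1 := hK s (hsub s hs')
        have a2 := hK' s (hsub s hs')
        calc |g' s * Real.sin s - g s * Real.cos s| ≤ |g' s * Real.sin s| + |g s * Real.cos s| := abs_sub _ _
          _ ≤ K * 1 + K * 1 := by
            rw [abs_mul, abs_mul]
            gcongr
            · exact Real.abs_sin_le_one s
            · exact Real.abs_cos_le_one s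
          _ = 2 * K := by ring
      refine hb.trans ?_
      rw [hv]
      simp only [Real.cos_pi_sub, Real.sin_pi_sub]
      have : -(2 * K) * (-Real.cos d / Real.sin d) - -(2 * K) * (Real.cos d / Real.sin d) = 4 * K * Real.cos d / Real.sin d := by ring
      rw [this]
      apply div_le_div_of_nonneg_right _ hsin.le
      have := Real.cos_le_one d
      nlinarith
    have hF1 := hFn d ⟨le_rfl, hle⟩ rfl
    have hF2 := hFn (Real.pi - d) ⟨hle, le_rfl⟩ (Real.sin_pi_sub d)
    have key : ‖Complex.I * x * ∫ s in d..(Real.pi - d), f s‖ ≤ 6 * K / Real.sin d := by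
      have : Complex.I * x * (∫ s in d..(Real.pi - d), f s) = (∫ s in d..(Real.pi - d), R s) - F (Real.pi - d) + F d := by
        linear_combination (-1) * hftc
      rw [this]
      calc _ ≤ ‖(∫ s in d..(Real.pi - d), R s)‖ + ‖F (Real.pi - d)‖ + ‖F d‖ :=
            (norm_add_le _ _).trans (by gcongr; exact norm_sub_le _ _)
        _ ≤ 4 * K / Real.sin d + K / Real.sin d + K / Real.sin d := by gcongr
        _ = _ := by ring
    rw [norm_mul, norm_mul, Complex.norm_I, one_mul, Complex.norm_real, Real.norm_eq_abs, abs_of_pos hx] at key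
    rw [le_div_iff₀ hx]
    linarith
  have h4 : 6 * K / Real.sin d / x ≤ 10 * K / (x * d) := by
    have : 2 / Real.pi * d ≤ Real.sin d := Real.mul_le_sin hd.le (by linarith)
    have h5 : (6/10) * d ≤ Real.sin d := by
      refine le_trans ?_ this
      apply mul_le_mul_of_nonneg_right _ hd.le
      rw [le_div_iff₀ Real.pi_pos]
      linarith [Real.pi_lt_d2]
    rw [div_div, div_le_div_iff₀ (by positivity) (by positivity)]
    have : 0 ≤ K * x := by positivity
    nlinarith [mul_le_mul_of_nonneg_left h5 this]
  rw [hsplit]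
  calc _ ≤ ‖∫ s in (0:ℝ)..d, f s‖ + ‖∫ s in d..(Real.pi - d), f s‖ + ‖∫ s in (Real.pi - d)..Real.pi, f s‖ := norm_add₃_le
    _ ≤ K * d + 10 * K / (x * d) + K * d := by gcongr; exact h2.trans h4
    _ = _ := by ring

lemma fresnel_reg (b : ℂ) (hb : 0 < b.re) :
    ‖(∫ y in (0:ℝ)..1, Complex.exp (-b * (y:ℂ)^2)) - (Real.pi / b) ^ (1/2 : ℂ) / 2
      + Complex.exp (-b) / (2 * b)‖ ≤ 1 / ‖b‖ ^ 2 := by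
  have hb0 : b ≠ 0 := by rintro rfl; simp at hb
  have hn : ∀ y : ℝ, ‖Complex.exp (-b * (y:ℂ)^2)‖ ≤ 1 := by
    intro y
    rw [Complex.norm_exp]
    apply Real.exp_le_one_iff.2
    have : (-b * (y:ℂ)^2).re = - b.re * y^2 := by
      rw [← Complex.ofReal_pow, Complex.re_mul_ofReal]; simp
    rw [this]; nlinarith [sq_nonneg y]
  set P : ℝ → ℂ := fun y => Complex.exp (-b * (y:ℂ)^2) * (-1/(2*b*y) + 1/(4*b^2*y^3)) with hP
  have hcont : Continuous fun y : ℝ => Complex.exp (-b * (y:ℂ)^2) := by fun_prop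
  have hlim : Tendsto (fun R : ℝ => ∫ y in (0:ℝ)..R, Complex.exp (-b * (y:ℂ)^2)) atTop
      (𝓝 ((Real.pi / b) ^ (1/2 : ℂ) / 2)) := by
    rw [← integral_gaussian_complex_Ioi hb]
    exact intervalIntegral_tendsto_integral_Ioi 0 (integrable_cexp_neg_mul_sq hb).integrableOn tendsto_id
  have hfin : ∀ R : ℝ, 1 ≤ R → ‖(∫ y in (0:ℝ)..1, Complex.exp (-b * (y:ℂ)^2)) -
      (∫ y in (0:ℝ)..R, Complex.exp (-b * (y:ℂ)^2)) + Complex.exp (-b) / (2 * b)‖ ≤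
      1 / (2 * ‖b‖^2) + (1/(2*‖b‖) + 1/(4*‖b‖^2)) * R⁻¹ := by
    intro R hR
    have hpos : ∀ y ∈ Set.uIcc 1 R, 0 < y := by
      intro y hy; rw [Set.uIcc_of_le hR] at hy; linarith [hy.1]
    have hder : ∀ y ∈ Set.uIcc 1 R, HasDerivAt P (Complex.exp (-b * (y:ℂ)^2) -
        (3/(4*b^2)) * (Complex.exp (-b * (y:ℂ)^2) * ((y^(-4:ℤ) : ℝ) : ℂ))) y := by
      intro y hy
      have hy0 : (y:ℂ) ≠ 0 := by exact_mod_cast (hpos y hy).ne'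
      have e0 : HasDerivAt (fun z : ℂ => Complex.exp (-b * z^2) * (-1/(2*b*z) + 1/(4*b^2*z^3)))
        (Complex.exp (-b * (y:ℂ)^2) -
        (3/(4*b^2)) * (Complex.exp (-b * (y:ℂ)^2) * ((y^(-4:ℤ) : ℝ) : ℂ))) (y:ℂ) := by
        have a1 := (((hasDerivAt_id (y:ℂ)).pow 2).const_mul (-b)).cexp
        have a2 := (hasDerivAt_const (y:ℂ) (-1:ℂ)).div ((hasDerivAt_id (y:ℂ)).const_mul (2*b)) (by simp [hb0, hy0])
        have a3 := (hasDerivAt_const (y:ℂ) (1:ℂ)).div (((hasDerivAt_id (y:ℂ)).pow 3).const_mul (4*b^2)) (by simp [hb0, hy0])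
        have := a1.mul (a2.add a3)
        refine this.congr_deriv ?_
        simp only [Pi.add_apply, Pi.div_apply, Pi.pow_apply, id]
        push_cast
        rw [show (-4:ℤ) = -((4:ℕ):ℤ) by norm_num, zpow_neg, zpow_natCast]
        field_simp
        ring
      exact e0.comp_ofReal
    have hi1 : IntervalIntegrable (fun y : ℝ => Complex.exp (-b * (y:ℂ)^2)) volume 1 R := hcont.intervalIntegrable _ _
    have hzc : ContinuousOn (fun y : ℝ => y^(-4:ℤ)) (Set.uIcc 1 R) := by
      intro y hy
      exact (continuousAt_zpow₀ y (-4) (Or.inl (hpos y hy).ne')).continuousWithinAt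
    have hi2 : IntervalIntegrable (fun y : ℝ => Complex.exp (-b * (y:ℂ)^2) * ((y^(-4:ℤ) : ℝ) : ℂ)) volume 1 R := by
      apply ContinuousOn.intervalIntegrable
      exact hcont.continuousOn.mul (Complex.continuous_ofReal.comp_continuousOn hzc)
    have hftc := intervalIntegral.integral_eq_sub_of_hasDerivAt hder (hi1.sub (hi2.const_mul _))
    rw [intervalIntegral.integral_sub hi1 (hi2.const_mul _), intervalIntegral.integral_const_mul] at hftc
    have hadd := intervalIntegral.integral_add_adjacent_intervals (hcont.intervalIntegrable (μ := volume) 0 1) hi1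
    have hzn : ‖∫ y in (1:ℝ)..R, Complex.exp (-b * (y:ℂ)^2) * ((y^(-4:ℤ) : ℝ) : ℂ)‖ ≤ 1/3 := by
      have : ‖∫ y in (1:ℝ)..R, Complex.exp (-b * (y:ℂ)^2) * ((y^(-4:ℤ) : ℝ) : ℂ)‖ ≤ ∫ y in (1:ℝ)..R, y^(-4:ℤ) := by
        apply intervalIntegral.norm_integral_le_of_norm_le hR _ hzc.intervalIntegrable
        refine Filter.Eventually.of_forall fun y hy => ?_
        have hy0 : 0 < y := by linarith [hy.1]
        rw [norm_mul, Complex.norm_real, Real.norm_eq_abs, abs_of_pos (zpow_pos hy0 _)]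
        have := hn y
        have := zpow_pos hy0 (-4)
        nlinarith
      refine this.trans ?_
      rw [integral_zpow (Or.inr ⟨by norm_num, fun h => lt_irrefl _ (hpos 0 h)⟩)]
      have : 0 < R ^ (-4+1:ℤ) := zpow_pos (by linarith) _
      norm_num at this ⊢
      have := inv_pos.2 this
      linarith
    have hP1 : P 1 = - Complex.exp (-b) / (2*b) + Complex.exp (-b) / (4*b^2) := by
      simp only [hP]; push_cast; field_simp
    have hPR : ‖P R‖ ≤ (1/(2*‖b‖) + 1/(4*‖b‖^2)) * R⁻¹ := by
      have hR0 : 0 < R := by linarith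
      have hbn : 0 < ‖b‖ := norm_pos_iff.2 hb0
      simp only [hP, norm_mul]
      calc _ ≤ 1 * (‖-1/(2*b*R)‖ + ‖1/(4*b^2*R^3)‖) := by
            gcongr
            · exact hn R
            · exact norm_add_le _ _
        _ = 1/(2*‖b‖) * R⁻¹ + 1/(4*‖b‖^2) * (R^3)⁻¹ := by
            simp [abs_of_pos hR0]; ring
        _ ≤ 1/(2*‖b‖) * R⁻¹ + 1/(4*‖b‖^2) * R⁻¹ := by
            gcongr
            nlinarith [mul_pos hR0 hR0]
        _ = _ := by ring
    have heq : (∫ y in (0:ℝ)..1, Complex.exp (-b * (y:ℂ)^2)) -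
      (∫ y in (0:ℝ)..R, Complex.exp (-b * (y:ℂ)^2)) + Complex.exp (-b) / (2 * b) =
      Complex.exp (-b) / (4*b^2) - P R - (3/(4*b^2)) * ∫ y in (1:ℝ)..R, Complex.exp (-b * (y:ℂ)^2) * ((y^(-4:ℤ) : ℝ) : ℂ) := by
      rw [hP1] at hftc
      linear_combination hadd - hftc
    rw [heq]
    have h1 : ‖Complex.exp (-b) / (4*b^2)‖ ≤ 1/(4*‖b‖^2) := by
      rw [norm_div]
      have := hn 1
      simp only [Complex.ofReal_one, one_pow, mul_one] at this
      simp only [norm_mul, norm_pow, Complex.norm_ofNat]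
      gcongr
    have h2 : ‖(3/(4*b^2)) * ∫ y in (1:ℝ)..R, Complex.exp (-b * (y:ℂ)^2) * ((y^(-4:ℤ) : ℝ) : ℂ)‖ ≤ 3/(4*‖b‖^2) * (1/3) := by
      rw [norm_mul]
      gcongr
      simp
    calc _ ≤ ‖Complex.exp (-b) / (4*b^2)‖ + ‖P R‖ + _ := (norm_sub_le _ _).trans (by gcongr; exact norm_sub_le _ _)
      _ ≤ 1/(4*‖b‖^2) + (1/(2*‖b‖) + 1/(4*‖b‖^2)) * R⁻¹ + 3/(4*‖b‖^2) * (1/3) := by gcongr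
      _ = _ := by ring
  have hL := ((tendsto_const_nhds (x := ∫ y in (0:ℝ)..1, Complex.exp (-b * (y:ℂ)^2))).sub hlim).add_const
    (Complex.exp (-b) / (2 * b)) |>.norm
  have hRr : Tendsto (fun R : ℝ => 1 / (2 * ‖b‖^2) + (1/(2*‖b‖) + 1/(4*‖b‖^2)) * R⁻¹) atTop
      (𝓝 (1 / (2 * ‖b‖^2) + (1/(2*‖b‖) + 1/(4*‖b‖^2)) * 0)) :=
    (tendsto_inv_atTop_zero.const_mul _).const_add _
  have := le_of_tendsto_of_tendsto hL hRr ((eventually_ge_atTop 1).mono hfin)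
  refine this.trans ?_
  rw [mul_zero, add_zero]
  have hbn : 0 < ‖b‖ := norm_pos_iff.2 hb0
  gcongr
  nlinarith [sq_nonneg ‖b‖]

lemma fresnel (x : ℝ) (hx : 0 < x) :
    ‖(∫ y in (0:ℝ)..1, Complex.exp (-(2 * Complex.I * x) * (y:ℂ)^2)) -
       (Real.sqrt (Real.pi / (2 * x)) * Complex.exp (-(Real.pi/4) * Complex.I)) / 2
      + Complex.exp (-(2 * Complex.I * x)) / (2 * (2 * Complex.I * x))‖ ≤ 1 / (2*x) ^ 2 := by
  have hx' : (x:ℂ) ≠ 0 := by exact_mod_cast hx.ne'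
  have hval : (Real.pi / (2 * Complex.I * x)) ^ (1/2 : ℂ) =
      Real.sqrt (Real.pi / (2 * x)) * Complex.exp (-(Real.pi/4) * Complex.I) := by
    have h1 : (Real.pi / (2 * Complex.I * x) : ℂ) = ((Real.pi / (2*x) : ℝ) : ℂ) * (-Complex.I) := by
      push_cast
      field_simp
      simp
    have h0 : 0 < Real.pi / (2 * x) := by positivity
    rw [h1, Complex.cpow_def_of_ne_zero (mul_ne_zero (by exact_mod_cast h0.ne') (by simp)),
      Complex.log_ofReal_mul h0 (by simp), Complex.log_neg_I, add_mul, Complex.exp_add,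
      Real.sqrt_eq_rpow, Real.rpow_def_of_pos h0]
    congr 1
    · push_cast; rfl
    · congr 1; ring
  rw [← hval]
  set c : ℝ → ℂ := fun e => 2 * Complex.I * x + e with hc
  have hc0 : c 0 = 2 * Complex.I * x := by simp [hc]
  have hcc : Continuous c := by fun_prop
  have hne : 2 * Complex.I * x ≠ 0 := by simp [hx']
  have hI : Continuous fun e : ℝ => ∫ y in (0:ℝ)..1, Complex.exp (-(c e) * (y:ℂ)^2) := by
    apply intervalIntegral.continuous_parametric_intervalIntegral_of_continuous'
    fun_prop
  have hsl : (Real.pi / c 0 : ℂ) ∈ Complex.slitPlane := by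
    rw [hc0, Complex.mem_slitPlane_iff]; right
    have h1 : (Real.pi / (2 * Complex.I * x) : ℂ) = ((Real.pi / (2*x) : ℝ) : ℂ) * (-Complex.I) := by
      push_cast
      field_simp
      simp
    rw [h1, Complex.im_ofReal_mul]
    simp [hx.ne', Real.pi_ne_zero]
  have hcont : ContinuousAt (fun e : ℝ => ‖(∫ y in (0:ℝ)..1, Complex.exp (-(c e) * (y:ℂ)^2)) - (Real.pi / c e) ^ (1/2 : ℂ) / 2
      + Complex.exp (-(c e)) / (2 * c e)‖) 0 := by
    have hd : ContinuousAt (fun e => (Real.pi / c e : ℂ)) 0 :=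
      continuousAt_const.div hcc.continuousAt (by rwa [hc0])
    have hp : ContinuousAt (fun e => (Real.pi / c e : ℂ) ^ (1/2 : ℂ)) 0 :=
      hd.cpow continuousAt_const hsl
    have hq : ContinuousAt (fun e => Complex.exp (-(c e)) / (2 * c e)) 0 := by
      apply ContinuousAt.div
      · fun_prop
      · fun_prop
      · rw [hc0]; simp [hx']
    exact ((hI.continuousAt.sub (hp.div_const 2)).add hq).norm
  have hcont2 : ContinuousAt (fun e : ℝ => 1 / ‖c e‖^2) 0 := by
    apply continuousAt_const.div (by fun_prop)
    rw [hc0]; simp [hx.ne']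
  have := le_of_tendsto_of_tendsto (hcont.tendsto.mono_left nhdsWithin_le_nhds)
    (hcont2.tendsto.mono_left (nhdsWithin_le_nhds (s := Set.Ioi 0)))
    (by
      filter_upwards [self_mem_nhdsWithin] with e he
      apply fresnel_reg
      simpa [hc] using he)
  simp only [hc0] at this
  refine this.trans (le_of_eq ?_)
  simp [abs_of_pos hx]
lemma subst_half (x : ℝ) : (∫ s in (0:ℝ)..Real.pi, Complex.exp (Complex.I * (x * Real.cos s : ℝ)) * ((2 * Real.cos (s/2) : ℝ) : ℂ))
    = 4 * Complex.exp (Complex.I * x) * ∫ y in (0:ℝ)..1, Complex.exp (-(2 * Complex.I * x) * (y:ℂ)^2) := by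
  have h := intervalIntegral.integral_deriv_smul_comp (a := 0) (b := Real.pi)
    (f := fun s => Real.sin (s/2)) (f' := fun s => Real.cos (s/2) * (1/2))
    (g := fun y : ℝ => Complex.exp (-(2 * Complex.I * x) * (y:ℂ)^2))
    (by
      intro s _
      exact ((hasDerivAt_id s).div_const 2).sin)
    (by fun_prop) (by fun_prop)
  simp only [zero_div, Real.sin_zero, Real.sin_pi_div_two] at h
  rw [← h, ← intervalIntegral.integral_const_mul]
  apply intervalIntegral.integral_congr
  intro s _
  have h1 : Real.cos s = 1 - 2 * Real.sin (s/2) ^ 2 := by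
    have := Real.cos_two_mul (s/2)
    rw [show 2 * (s/2) = s by ring] at this
    rw [this, Real.cos_sq']; ring
  simp only [Function.comp, Complex.real_smul, h1]
  have h2 : Complex.exp (Complex.I * ((x * (1 - 2 * Real.sin (s/2) ^ 2) : ℝ) : ℂ)) =
      Complex.exp (Complex.I * x) * Complex.exp (-(2 * Complex.I * x) * ((Real.sin (s/2) : ℝ):ℂ)^2) := by
    rw [← Complex.exp_add]; congr 1; push_cast; ring
  rw [h2]; push_cast; ring

lemma cos_quarter (s : ℝ) (hs : s ∈ Set.Icc 0 Real.pi) : 1/2 ≤ Real.cos (s/4) ∧ 1/2 ≤ Real.cos (s/4)^2 := by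
  have h1 : Real.cos (Real.pi/4) ≤ Real.cos (s/4) := by
    apply Real.cos_le_cos_of_nonneg_of_le_pi
    · linarith [hs.1]
    · linarith [Real.pi_pos]
    · linarith [hs.2]
  rw [Real.cos_pi_div_four] at h1
  have h2 : (0:ℝ) ≤ Real.sqrt 2 := Real.sqrt_nonneg 2
  have h3 : Real.sqrt 2 ^ 2 = 2 := Real.sq_sqrt (by norm_num)
  constructor <;> nlinarith

lemma parts (x : ℝ) : Complex.I * x * (∫ s in (0:ℝ)..Real.pi, Complex.exp (Complex.I * (x * Real.cos s : ℝ)) *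
      ((1 + Real.cos s - 2 * Real.cos (s/2) : ℝ) : ℂ)) =
    Complex.exp (-(Complex.I * x)) - (1/4) * ∫ s in (0:ℝ)..Real.pi, Complex.exp (Complex.I * (x * Real.cos s : ℝ)) *
      ((1 / Real.cos (s/4)^2 : ℝ) : ℂ) := by
  have hpos := Real.pi_pos
  have hi1 : IntervalIntegrable (fun s => Complex.exp (Complex.I * (x * Real.cos s : ℝ)) *
      ((1 + Real.cos s - 2 * Real.cos (s/2) : ℝ) : ℂ)) volume 0 Real.pi :=
    Continuous.intervalIntegrable (by fun_prop) _ _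
  have hi2 : IntervalIntegrable (fun s => Complex.exp (Complex.I * (x * Real.cos s : ℝ)) *
      ((1 / Real.cos (s/4)^2 : ℝ) : ℂ)) volume 0 Real.pi := by
    apply ContinuousOn.intervalIntegrable
    rw [Set.uIcc_of_le hpos.le]
    apply ContinuousOn.mul (Continuous.continuousOn (by fun_prop))
    apply Complex.continuous_ofReal.comp_continuousOn
    apply ContinuousOn.div (by fun_prop) (by fun_prop)
    intro s hs
    have := (cos_quarter s hs).2
    positivity
  have hder : ∀ s ∈ Set.uIcc 0 Real.pi, HasDerivAt
      (fun s => Complex.exp (Complex.I * (x * Real.cos s : ℝ)) * ((Real.tan (s/4) : ℝ) : ℂ))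
      (Complex.I * x * (Complex.exp (Complex.I * (x * Real.cos s : ℝ)) *
      ((1 + Real.cos s - 2 * Real.cos (s/2) : ℝ) : ℂ)) + (1/4) * (Complex.exp (Complex.I * (x * Real.cos s : ℝ)) *
      ((1 / Real.cos (s/4)^2 : ℝ) : ℂ))) s := by
    intro s hs
    rw [Set.uIcc_of_le hpos.le] at hs
    have hc : Real.cos (s/4) ≠ 0 := by linarith [(cos_quarter s hs).1]
    have e1 := (HasDerivAt.comp s (Real.hasDerivAt_tan hc) ((hasDerivAt_id s).div_const 4)).ofReal_comp
    have e2 := ((((Real.hasDerivAt_cos s).const_mul x).ofReal_comp).const_mul Complex.I).cexp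
    refine (e2.mul e1).congr_deriv ?_
    have key : 1 + Real.cos s - 2 * Real.cos (s/2) = - Real.sin s * Real.tan (s/4) := by
      have a1 := Real.cos_two_mul (s/2)
      have a2 := Real.sin_two_mul (s/2)
      have a3 := Real.cos_two_mul (s/4)
      have a4 := Real.sin_two_mul (s/4)
      rw [show 2 * (s/2) = s by ring] at a1 a2
      rw [show 2 * (s/4) = s/2 by ring] at a3 a4
      rw [Real.tan_eq_sin_div_cos, a1, a2, a4, a3]
      field_simp
      rw [Real.sin_sq]; ring
    rw [key]
    simp only [Function.comp, id]
    push_cast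
    ring
  have hftc := intervalIntegral.integral_eq_sub_of_hasDerivAt hder ((hi1.const_mul _).add (hi2.const_mul _))
  rw [intervalIntegral.integral_add (hi1.const_mul _) (hi2.const_mul _), intervalIntegral.integral_const_mul,
    intervalIntegral.integral_const_mul] at hftc
  simp only [Real.tan_pi_div_four, Real.cos_pi, zero_div, Real.tan_zero] at hftc
  rw [eq_sub_iff_add_eq, hftc]
  simp

lemma V_bound (x : ℝ) (hx : 1 ≤ x) : ‖∫ s in (0:ℝ)..Real.pi, Complex.exp (Complex.I * (x * Real.cos s : ℝ)) *
      ((1 / Real.cos (s/4)^2 : ℝ) : ℂ)‖ ≤ 24 * x ^ (-(1:ℝ)/2) := by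
  have hx0 : 0 < x := by linarith
  have h := vdc (fun s => 1 / Real.cos (s/4)^2) (fun s => Real.sin (s/4) / (2 * Real.cos (s/4)^3)) 2
    (by
      intro s hs
      have hc : Real.cos (s/4) ≠ 0 := by linarith [(cos_quarter s hs).1]
      have e1 := (((hasDerivAt_id s).div_const 4).cos.pow 2)
      have := (hasDerivAt_const s (1:ℝ)).div e1 (by simpa using hc)
      refine this.congr_deriv ?_
      simp only [Pi.pow_apply, id]
      field_simp
      push_cast
      ring)
    (by
      apply ContinuousOn.div (by fun_prop) (by fun_prop)
      intro s hs
      have := (cos_quarter s hs).1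
      positivity)
    (by
      intro s hs
      have := (cos_quarter s hs).2
      rw [abs_of_nonneg (by positivity), div_le_iff₀ (by positivity)]
      linarith)
    (by
      intro s hs
      obtain ⟨h1, h2⟩ := cos_quarter s hs
      have h0 : 0 < Real.cos (s/4) := by linarith
      rw [abs_div, abs_of_pos (a := 2 * Real.cos (s/4)^3) (by positivity), div_le_iff₀ (by positivity)]
      have := Real.abs_sin_le_one (s/4)
      nlinarith [mul_le_mul h1 h2 (by norm_num) h0.le])
    x (x ^ (-(1:ℝ)/2)) hx0 (by positivity) (Real.rpow_le_one_of_one_le_of_nonpos hx (by norm_num))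
  refine h.trans (le_of_eq ?_)
  have e : 1 / (x * x ^ (-(1:ℝ)/2)) = x ^ (-(1:ℝ)/2) := by
    rw [← Real.rpow_one_add' hx0.le (by norm_num), one_div, ← Real.rpow_neg hx0.le]; norm_num
  rw [show 10 * 2 / (x * x ^ (-(1:ℝ)/2)) = 20 * (1 / (x * x ^ (-(1:ℝ)/2))) by ring, e]
  ring

lemma A_asymp (x : ℝ) (hx : 1 ≤ x) :
    ‖(∫ s in (0:ℝ)..Real.pi, Complex.exp (Complex.I * (x * Real.cos s : ℝ)) * ((1 + Real.cos s : ℝ) : ℂ))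
      - 2 * (Real.sqrt (Real.pi / (2 * x)) * Complex.exp (-(Real.pi/4) * Complex.I)) * Complex.exp (Complex.I * x)‖
      ≤ 7 * x ^ (-(3:ℝ)/2) := by
  have hx0 : 0 < x := by linarith
  have hxc : (x:ℂ) ≠ 0 := by exact_mod_cast hx0.ne'
  have hsum : (∫ s in (0:ℝ)..Real.pi, Complex.exp (Complex.I * (x * Real.cos s : ℝ)) * ((1 + Real.cos s : ℝ) : ℂ))
    = (∫ s in (0:ℝ)..Real.pi, Complex.exp (Complex.I * (x * Real.cos s : ℝ)) * ((2 * Real.cos (s/2) : ℝ) : ℂ)) +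
     (∫ s in (0:ℝ)..Real.pi, Complex.exp (Complex.I * (x * Real.cos s : ℝ)) *
      ((1 + Real.cos s - 2 * Real.cos (s/2) : ℝ) : ℂ)) := by
    rw [← intervalIntegral.integral_add]
    · congr 1; ext s; push_cast; ring
    · exact Continuous.intervalIntegrable (by fun_prop) _ _
    · exact Continuous.intervalIntegrable (by fun_prop) _ _
  have hp := parts x
  have hV := V_bound x hx
  have hF := fresnel x hx0
  rw [subst_half] at hsum
  rw [hsum]
  set D := (∫ s in (0:ℝ)..Real.pi, Complex.exp (Complex.I * (x * Real.cos s : ℝ)) *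
      ((1 + Real.cos s - 2 * Real.cos (s/2) : ℝ) : ℂ))
  set V := ∫ s in (0:ℝ)..Real.pi, Complex.exp (Complex.I * (x * Real.cos s : ℝ)) *
      ((1 / Real.cos (s/4)^2 : ℝ) : ℂ)
  set Φ := ∫ y in (0:ℝ)..1, Complex.exp (-(2 * Complex.I * x) * (y:ℂ)^2)
  set S := (Real.sqrt (Real.pi / (2 * x)) * Complex.exp (-(Real.pi/4) * Complex.I))
  have hD : D = (Complex.exp (-(Complex.I * x)) - (1/4) * V) / (Complex.I * x) := by
    rw [eq_div_iff (by simp [hxc]), ← hp]; ring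
  have hE : Complex.exp (-(Complex.I * x)) = Complex.exp (Complex.I * x) * Complex.exp (-(2 * Complex.I * x)) := by
    rw [← Complex.exp_add]; congr 1; ring
  have heq : 4 * Complex.exp (Complex.I * x) * Φ + D - 2 * S * Complex.exp (Complex.I * x) =
      4 * Complex.exp (Complex.I * x) * (Φ - S / 2 + Complex.exp (-(2 * Complex.I * x)) / (2 * (2 * Complex.I * x)))
      - V / (4 * (Complex.I * x)) := by
    rw [hD, hE]; field_simp; ring
  rw [heq]
  have hen : ‖Complex.exp (Complex.I * x)‖ = 1 := by
    rw [mul_comm]; exact Complex.norm_exp_ofReal_mul_I _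
  have e1 : x ^ (-(3:ℝ)/2) = x ^ (-(1:ℝ)/2) / x := by
    rw [← Real.rpow_sub_one hx0.ne']; norm_num
  have e2 : 1 / x^2 ≤ x ^ (-(3:ℝ)/2) := by
    rw [one_div, ← Real.rpow_natCast, ← Real.rpow_neg hx0.le]
    apply Real.rpow_le_rpow_of_exponent_le hx; norm_num
  calc _ ≤ _ := norm_sub_le _ _
    _ ≤ 4 * (1 / (2*x)^2) + (24 * x ^ (-(1:ℝ)/2)) / (4 * x) := by
      rw [norm_mul, norm_mul, hen, norm_div]
      simp only [norm_mul, Complex.norm_I, Complex.norm_real, Complex.norm_ofNat, Real.norm_eq_abs, abs_of_pos hx0, mul_one, one_mul]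
      gcongr
    _ = 1 / x^2 + 6 * x ^ (-(3:ℝ)/2) := by rw [e1]; field_simp; ring
    _ ≤ _ := by linarith
end helpers

lemma besselJ_im (n : ℤ) (x : ℝ) : (besselJ n x).im = 0 := by
  rw [← Complex.conj_eq_iff_im, besselJ, map_mul, intervalIntegral.integral_of_le (by linarith [Real.pi_pos]), ← integral_conj,
    ← intervalIntegral.integral_of_le (by linarith [Real.pi_pos]),
    ← intervalIntegral.integral_of_le (by linarith [Real.pi_pos])]
  congr 1
  · have : (1 / (2 * Real.pi) : ℂ) = ((1 / (2 * Real.pi) : ℝ) : ℂ) := by push_cast; rfl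
    rw [this, Complex.conj_ofReal]
  · have := intervalIntegral.integral_comp_neg (a := -Real.pi) (b := Real.pi)
      (fun τ : ℝ => Complex.exp (Complex.I * ((x * Real.sin τ : ℝ) - (n * τ : ℝ))))
    rw [neg_neg] at this
    rw [← this]
    congr 1; ext τ
    rw [← Complex.exp_conj]
    congr 1
    rw [map_mul, map_sub, Complex.conj_I, Complex.conj_ofReal, Complex.conj_ofReal, Real.sin_neg]
    push_cast; ring

lemma exp_int_pi (n : ℤ) : Complex.exp (-(Complex.I * (n * Real.pi))) = Complex.exp (Complex.I * (n * Real.pi)) := by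
  rw [Complex.exp_eq_exp_iff_exists_int]
  exact ⟨-n, by push_cast; ring⟩

lemma besselJ_rec (n : ℤ) (x : ℝ) (hx : x ≠ 0) :
    besselJ (n+1) x = 2 * n / x * besselJ n x - besselJ (n-1) x := by
  have hxc : (x:ℂ) ≠ 0 := by exact_mod_cast hx
  set f : ℤ → ℝ → ℂ := fun n τ => Complex.exp (Complex.I * ((x * Real.sin τ : ℝ) - (n * τ : ℝ))) with hf
  have hi : ∀ n, IntervalIntegrable (f n) volume (-Real.pi) Real.pi := fun n =>
    Continuous.intervalIntegrable (by fun_prop) _ _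
  have hder : ∀ τ ∈ Set.uIcc (-Real.pi) Real.pi, HasDerivAt (f n)
      ((Complex.I * x / 2) * (f (n+1) τ + f (n-1) τ) - Complex.I * n * f n τ) τ := by
    intro τ _
    have e := (((((Real.hasDerivAt_sin τ).const_mul x).ofReal_comp).sub
      (((hasDerivAt_id τ).const_mul (n:ℝ)).ofReal_comp)).const_mul Complex.I).cexp
    refine e.congr_deriv ?_
    have h1 : f (n+1) τ = f n τ * Complex.exp (-τ * Complex.I) := by
      simp only [hf]; rw [← Complex.exp_add]; congr 1; push_cast; ring
    have h2 : f (n-1) τ = f n τ * Complex.exp (τ * Complex.I) := by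
      simp only [hf]; rw [← Complex.exp_add]; congr 1; push_cast; ring
    have h3 := Complex.two_cos (τ : ℂ)
    rw [h1, h2]
    have h4 : f n τ = Complex.exp (Complex.I * ((x * Real.sin τ : ℝ) - (n * τ : ℝ))) := rfl
    simp only [Pi.sub_apply, id]
    rw [← h4]
    push_cast
    linear_combination (Complex.I * x / 2 * f n τ) * h3
  have hftc := intervalIntegral.integral_eq_sub_of_hasDerivAt hder
    ((((hi _).add (hi _)).const_mul _).sub ((hi _).const_mul _))
  have hb : f n Real.pi - f n (-Real.pi) = 0 := by
    simp only [hf, Real.sin_neg, Real.sin_pi]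
    have := exp_int_pi n
    rw [sub_eq_zero]
    convert this using 2 <;> push_cast <;> ring
  rw [hb, intervalIntegral.integral_sub (((hi _).add (hi _)).const_mul _) ((hi _).const_mul _),
    intervalIntegral.integral_const_mul, intervalIntegral.integral_const_mul,
    intervalIntegral.integral_add (hi _) (hi _)] at hftc
  have hJ : ∀ m, besselJ m x = (1 / (2 * Real.pi)) * ∫ τ in (-Real.pi)..Real.pi, f m τ := fun m => rfl
  rw [hJ, hJ, hJ]
  have key : (∫ τ in (-Real.pi)..Real.pi, f (n+1) τ) = 2 * n / x * (∫ τ in (-Real.pi)..Real.pi, f n τ)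
      - ∫ τ in (-Real.pi)..Real.pi, f (n-1) τ := by
    have hI := Complex.I_ne_zero
    have h5 : Complex.I * (x * ((∫ τ in (-Real.pi)..Real.pi, f (n+1) τ) + (∫ τ in (-Real.pi)..Real.pi, f (n-1) τ))
      - 2 * n * (∫ τ in (-Real.pi)..Real.pi, f n τ)) = 0 := by linear_combination 2 * hftc
    have h6 := (mul_eq_zero.1 h5).resolve_left hI
    field_simp
    linear_combination h6
  rw [key]; ring

lemma besselJ_comb (x : ℝ) : besselJ 0 x + Complex.I * besselJ 1 x =
    (1 / Real.pi) * ∫ s in (0:ℝ)..Real.pi, Complex.exp (Complex.I * (x * Real.cos s : ℝ)) * ((1 + Real.cos s : ℝ) : ℂ) := by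
  set g : ℝ → ℂ := fun τ => Complex.exp (Complex.I * (x * Real.sin τ : ℝ)) * (1 + Complex.I * Complex.exp (-(Complex.I * τ))) with hg
  set k : ℝ → ℂ := fun s => Complex.exp (Complex.I * (x * Real.cos s : ℝ)) * (1 + Complex.exp (-(Complex.I * s))) with hk
  have hgc : Continuous g := by fun_prop
  have hkc : Continuous k := by fun_prop
  have h1 : besselJ 0 x + Complex.I * besselJ 1 x = (1 / (2 * Real.pi)) * ∫ τ in (-Real.pi)..Real.pi, g τ := by
    rw [besselJ, besselJ]
    have : ∀ τ, g τ = Complex.exp (Complex.I * ((x * Real.sin τ : ℝ) - (((0:ℤ):ℝ) * τ : ℝ))) +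
       Complex.I * Complex.exp (Complex.I * ((x * Real.sin τ : ℝ) - (((1:ℤ):ℝ) * τ : ℝ))) := by
      intro τ
      simp only [hg, mul_sub, Complex.exp_sub, mul_add]
      rw [Complex.exp_neg]
      push_cast
      simp
      ring
    simp_rw [this]
    rw [intervalIntegral.integral_add, intervalIntegral.integral_const_mul]
    · ring
    · exact Continuous.intervalIntegrable (by fun_prop) _ _
    · exact Continuous.intervalIntegrable (by fun_prop) _ _
  have hper : Function.Periodic g (2 * Real.pi) := by
    intro τ
    simp only [hg, Real.sin_add_two_pi]
    congr 3
    rw [Complex.exp_eq_exp_iff_exists_int]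
    exact ⟨-1, by push_cast; ring⟩
  have hgk : ∀ s, g (s + Real.pi/2) = k s := by
    intro s
    simp only [hg, hk, Real.sin_add_pi_div_two]
    congr 2
    push_cast
    rw [show -(Complex.I * (s + Real.pi/2)) = -(Complex.I * s) + (-(Real.pi/2) * Complex.I) by ring, Complex.exp_add]
    have : Complex.exp (-(Real.pi/2) * Complex.I) = -Complex.I := by
      rw [neg_mul, Complex.exp_neg, Complex.exp_pi_div_two_mul_I, Complex.inv_I]
    rw [this]
    linear_combination (-Complex.exp (-(Complex.I * s))) * Complex.I_mul_I
  have h2 : (∫ τ in (-Real.pi)..Real.pi, g τ) = ∫ s in (-Real.pi)..Real.pi, k s := by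
    simp_rw [← hgk]
    rw [intervalIntegral.integral_comp_add_right (f := g)]
    have := hper.intervalIntegral_add_eq (-Real.pi) (-Real.pi + Real.pi/2)
    rw [show -Real.pi + 2 * Real.pi = Real.pi by ring,
      show -Real.pi + Real.pi/2 + 2 * Real.pi = Real.pi + Real.pi/2 by ring] at this
    exact this
  have h3 : (∫ s in (-Real.pi)..Real.pi, k s) = ∫ s in (0:ℝ)..Real.pi, (k (-s) + k s) := by
    rw [intervalIntegral.integral_add (Continuous.intervalIntegrable (by fun_prop) _ _) (hkc.intervalIntegrable _ _),
      intervalIntegral.integral_comp_neg (f := k), neg_zero,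
      intervalIntegral.integral_add_adjacent_intervals (hkc.intervalIntegrable _ _) (hkc.intervalIntegrable _ _)]
  have h4 : ∀ s, k (-s) + k s = 2 * (Complex.exp (Complex.I * (x * Real.cos s : ℝ)) * ((1 + Real.cos s : ℝ) : ℂ)) := by
    intro s
    simp only [hk, Real.cos_neg]
    have h3 := Complex.two_cos (s : ℂ)
    rw [show (s:ℂ) * Complex.I = -(Complex.I * ((-s : ℝ):ℂ)) by push_cast; ring,
      show (-s:ℂ) * Complex.I = -(Complex.I * s) by ring] at h3
    push_cast at h3 ⊢
    linear_combination (-Complex.exp (Complex.I * (x * Complex.cos s))) * h3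
  rw [h1, h2, h3]
  simp_rw [h4]
  rw [intervalIntegral.integral_const_mul]
  have : (Real.pi : ℂ) ≠ 0 := by exact_mod_cast Real.pi_ne_zero
  field_simp

lemma base (x : ℝ) (hx : 1 ≤ x) :
    ‖besselJ 0 x + Complex.I * besselJ 1 x - Real.sqrt (2 / (Real.pi * x)) * Complex.exp ((x - Real.pi/4 : ℝ) * Complex.I)‖
      ≤ 7 * x ^ (-(3:ℝ)/2) := by
  have hx0 : 0 < x := by linarith
  have hpi := Real.pi_gt_three
  have hs : 2 / Real.pi * Real.sqrt (Real.pi / (2 * x)) = Real.sqrt (2 / (Real.pi * x)) := by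
    symm
    rw [Real.sqrt_eq_iff_mul_self_eq (by positivity) (by positivity)]
    have := Real.mul_self_sqrt (show 0 ≤ Real.pi / (2 * x) by positivity)
    symm
    calc _ = 4 / Real.pi^2 * (Real.sqrt (Real.pi / (2 * x)) * Real.sqrt (Real.pi / (2 * x))) := by ring
      _ = _ := by rw [this]; field_simp; norm_num
  have hA := A_asymp x hx
  have he : Complex.exp ((x - Real.pi/4 : ℝ) * Complex.I) = Complex.exp (-(Real.pi/4) * Complex.I) * Complex.exp (Complex.I * x) := by
    rw [← Complex.exp_add]; congr 1; push_cast; ring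
  rw [besselJ_comb, ← hs, he]
  set A := ∫ s in (0:ℝ)..Real.pi, Complex.exp (Complex.I * (x * Real.cos s : ℝ)) * ((1 + Real.cos s : ℝ) : ℂ)
  have : (1 / Real.pi : ℂ) * A - ((2 / Real.pi * Real.sqrt (Real.pi / (2 * x)) : ℝ) : ℂ) *
      (Complex.exp (-(Real.pi/4) * Complex.I) * Complex.exp (Complex.I * x)) =
    ((1 / Real.pi : ℝ) : ℂ) * (A - 2 * (Real.sqrt (Real.pi / (2 * x)) * Complex.exp (-(Real.pi/4) * Complex.I)) * Complex.exp (Complex.I * x)) := by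
    push_cast; ring
  rw [this, norm_mul, Complex.norm_real, Real.norm_eq_abs, abs_of_pos (by positivity)]
  have h1 : 1 / Real.pi ≤ 1 := by rw [div_le_one (by linarith)]; linarith
  calc _ ≤ 1 * (7 * x ^ (-(3:ℝ)/2)) := by gcongr
    _ = _ := one_mul _

lemma besselJ_real (n : ℤ) (x : ℝ) : besselJ n x = ((besselJ n x).re : ℂ) :=
  Complex.ext (by simp) (by simp [besselJ_im])

lemma main_step (n : ℕ) : ∃ C, 0 ≤ C ∧ ∀ x : ℝ, 1 ≤ x →
    ‖besselJ n x - ((Real.sqrt (2 / (Real.pi * x)) * Real.cos (x - n * Real.pi / 2 - Real.pi / 4) : ℝ) : ℂ)‖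
        ≤ C * x ^ (-(3 : ℝ) / 2) := by
  induction n using Nat.strong_induction_on with
  | _ n ih =>
  match n, ih with
  | 0, _ =>
    refine ⟨7, by norm_num, fun x hx => ?_⟩
    have h := (Complex.abs_re_le_norm _).trans (base x hx)
    rw [Nat.cast_zero, besselJ_real 0 x, ← Complex.ofReal_sub, Complex.norm_real, Real.norm_eq_abs]
    rw [besselJ_real 0 x, besselJ_real 1 x] at h
    simp only [Complex.sub_re, Complex.add_re, Complex.ofReal_re, Complex.re_ofReal_mul, Complex.exp_ofReal_mul_I_re,
      Complex.re_mul_ofReal, Complex.I_re, zero_mul, add_zero] at h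
    simpa using h
  | 1, _ =>
    refine ⟨7, by norm_num, fun x hx => ?_⟩
    have h := (Complex.abs_im_le_norm _).trans (base x hx)
    rw [Nat.cast_one, besselJ_real 1 x, ← Complex.ofReal_sub, Complex.norm_real, Real.norm_eq_abs]
    rw [besselJ_real 0 x, besselJ_real 1 x] at h
    simp only [Complex.sub_im, Complex.add_im, Complex.ofReal_im, Complex.im_ofReal_mul, Complex.exp_ofReal_mul_I_im,
      Complex.im_mul_ofReal, Complex.I_im, one_mul, zero_add] at h
    have e : Real.cos (x - ((1:ℕ):ℝ) * Real.pi / 2 - Real.pi / 4) = Real.sin (x - Real.pi/4) := by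
      rw [← Real.cos_sub_pi_div_two]; congr 1; push_cast; ring
    rw [e]
    exact h
  | m+2, ih =>
    obtain ⟨C0, hC0, h0⟩ := ih m (by omega)
    obtain ⟨C1, hC1, h1⟩ := ih (m+1) (by omega)
    refine ⟨2 * (m+1) * (C1 + 1) + C0, by positivity, fun x hx => ?_⟩
    have hx0 : 0 < x := by linarith
    have hr := besselJ_rec (m+1) x hx0.ne'
    rw [show ((m:ℤ)+1+1) = ((m+2 : ℕ) : ℤ) by push_cast; ring, show ((m:ℤ)+1-1) = m by ring] at hr
    specialize h0 x hx
    specialize h1 x hx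
    have e : Real.cos (x - ((m+2:ℕ):ℝ) * Real.pi / 2 - Real.pi / 4) = - Real.cos (x - m * Real.pi / 2 - Real.pi/4) := by
      rw [← Real.cos_sub_pi]; congr 1; push_cast; ring
    have hn : ‖besselJ ((m+1:ℕ):ℤ) x‖ ≤ (C1 + 1) * x ^ (-(1:ℝ)/2) := by
      have a1 : x ^ (-(3:ℝ)/2) ≤ x ^ (-(1:ℝ)/2) := Real.rpow_le_rpow_of_exponent_le hx (by norm_num)
      have a2 : Real.sqrt (2 / (Real.pi * x)) ≤ x ^ (-(1:ℝ)/2) := by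
        rw [show (-(1:ℝ)/2) = -(1/2) by ring, Real.rpow_neg hx0.le, ← Real.sqrt_eq_rpow, ← Real.sqrt_inv]
        apply Real.sqrt_le_sqrt
        rw [div_le_iff₀ (by positivity)]
        field_simp
        linarith [Real.pi_gt_three]
      set c := Real.cos (x - ((m+1:ℕ):ℝ) * Real.pi / 2 - Real.pi / 4) with hc
      have a3 : ‖((Real.sqrt (2 / (Real.pi * x)) * c : ℝ) : ℂ)‖ ≤ x ^ (-(1:ℝ)/2) := by
        rw [Complex.norm_real, norm_mul, Real.norm_eq_abs, Real.norm_eq_abs, abs_of_nonneg (Real.sqrt_nonneg _)]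
        calc _ ≤ x ^ (-(1:ℝ)/2) * 1 := by gcongr; exact Real.abs_cos_le_one _
          _ = _ := mul_one _
      calc _ = ‖(besselJ ((m+1:ℕ):ℤ) x - ((Real.sqrt (2 / (Real.pi * x)) * c : ℝ) : ℂ)) + ((Real.sqrt (2 / (Real.pi * x)) * c : ℝ) : ℂ)‖ := by
            rw [sub_add_cancel]
        _ ≤ _ := norm_add_le _ _
        _ ≤ C1 * x ^ (-(3:ℝ)/2) + x ^ (-(1:ℝ)/2) := add_le_add h1 a3
        _ ≤ C1 * x ^ (-(1:ℝ)/2) + x ^ (-(1:ℝ)/2) := by gcongr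
        _ = _ := by ring
    rw [hr, e]
    rw [show ((m:ℤ)+1) = ((m+1:ℕ):ℤ) by push_cast; ring]
    set J1 := besselJ ((m+1:ℕ):ℤ) x
    set J0 := besselJ m x
    set q := Real.sqrt (2 / (Real.pi * x)) * Real.cos (x - m * Real.pi / 2 - Real.pi/4) with hq
    have heq : 2 * (((m+1:ℕ):ℤ):ℂ) / x * J1 - J0 - ((Real.sqrt (2 / (Real.pi * x)) * -Real.cos (x - m * Real.pi / 2 - Real.pi/4) : ℝ) : ℂ)
        = ((2 * (m+1) / x : ℝ) : ℂ) * J1 - (J0 - (q:ℂ)) := by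
      rw [hq]; push_cast; ring
    rw [heq]
    have e1 : x ^ (-(3:ℝ)/2) = x ^ (-(1:ℝ)/2) / x := by
      rw [← Real.rpow_sub_one hx0.ne']; norm_num
    calc _ ≤ _ := norm_sub_le _ _
      _ ≤ (2 * (m+1) / x) * ((C1 + 1) * x ^ (-(1:ℝ)/2)) + C0 * x ^ (-(3:ℝ)/2) := by
        rw [norm_mul, Complex.norm_real, Real.norm_eq_abs, abs_of_nonneg (by positivity)]
        gcongr
      _ = _ := by rw [e1]; ring

/-- The large-argument asymptotics of the Bessel function: for fixed `n ≥ 0`, as `x → +∞`,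
`J_n(x) = √(2/(πx)) cos(x − nπ/2 − π/4) + O(x^{−3/2})`. -/
theorem besselJ_asymptotics (n : ℕ) :
    ∃ C x₀ : ℝ, ∀ x : ℝ, x₀ ≤ x →
      ‖besselJ n x -
          ((Real.sqrt (2 / (Real.pi * x)) *
              Real.cos (x - n * Real.pi / 2 - Real.pi / 4) : ℝ) : ℂ)‖
        ≤ C * x ^ (-(3 : ℝ) / 2) := by
  obtain ⟨C, _, h⟩ := main_step n
  exact ⟨C, 1, h⟩

end
end
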